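/- arXiv:1502.02624 — 2 statements merged into one kernel-verified Lean document; each statement's English description precedes it below -/
import Mathlib

section
/- There exists N such that for all n ≥ N the following holds for D = {i : 1 ≤ i ≤ 2^{n+1} − 3, i odd}: every irreducible solution U of length ℓ for D satisfies n·s(U) ≥ ℓ, and the irreducible solutions U with n·s(U) = ℓ (i.e. of minimal density 1/n) are exactly, up to shift, the following two: (1) the solution of length n with u_{2^n−1} = 1 and u_d = 0 for all other d ∈ D; (2) the solution of length 2n with u_{2^{n+1}−3} = 2^{n−1}, u_{3·2^{n−1}−1} = 1, and u_d = 0 for all other d ∈ D (note 2^{n−1}(2^{n+1}−3) + (3·2^{n−1}−1) = 2^{2n} − 1). -/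
/-- The binary weight `s₂(m)`: the sum of the base-2 digits of `m`. -/
def s2 (m : ℕ) : ℕ := (Nat.digits 2 m).sum

/-- The shift map on `{0, …, 2^ℓ - 1}`: it fixes `2^ℓ - 1` and sends any other `i`
to the remainder of `2·i` modulo `2^ℓ - 1`. -/
def shift2 (ℓ i : ℕ) : ℕ := if i = 2 ^ ℓ - 1 then i else (2 * i) % (2 ^ ℓ - 1)

/-- `U : ℕ → ℕ` (supported on `D`) is a solution of length `ℓ` for `D`:
`0 ≤ u_d ≤ 2^ℓ - 1` and `∑ d·u_d` is a positive multiple of `2^ℓ - 1`. -/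
structure IsSolution (D : Finset ℕ) (ℓ : ℕ) (U : ℕ → ℕ) : Prop where
  len_pos : 1 ≤ ℓ
  bounded : ∀ d, U d ≤ 2 ^ ℓ - 1
  supp_sub : ∀ d, d ∉ D → U d = 0
  dvd : (2 ^ ℓ - 1) ∣ ∑ d ∈ D, d * U d
  pos : 0 < ∑ d ∈ D, d * U d

/-- The weight `s(U) = ∑_{d ∈ D} s₂(u_d)` of a solution. -/
def weight (D : Finset ℕ) (U : ℕ → ℕ) : ℕ := ∑ d ∈ D, s2 (U d)

/-- The support map `φ_U(k) = (∑_{d ∈ D} d·δ^k(u_d)) / (2^ℓ - 1)` of a solution,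
viewed as an `ℓ`-periodic function on `ℕ`. -/
def supportMap (D : Finset ℕ) (ℓ : ℕ) (U : ℕ → ℕ) (k : ℕ) : ℕ :=
  (∑ d ∈ D, d * (shift2 ℓ)^[k] (U d)) / (2 ^ ℓ - 1)

/-- A solution is irreducible when its support map is injective on `ℤ/ℓℤ`,
i.e. injective on `{0, …, ℓ-1}`. -/
def IrreducibleSol (D : Finset ℕ) (ℓ : ℕ) (U : ℕ → ℕ) : Prop :=
  Set.InjOn (supportMap D ℓ U) ↑(Finset.range ℓ)

/-- `U` is a shift of `V` (coordinatewise iterate of the shift map). -/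
def IsShiftOf (ℓ : ℕ) (U V : ℕ → ℕ) : Prop :=
  ∃ k, ∀ d, U d = (shift2 ℓ)^[k] (V d)

/-- The set of odd integers `1 ≤ i ≤ d`. -/
def oddUpTo (d : ℕ) : Finset ℕ := (Finset.range (d + 1)).filter (fun i => i % 2 = 1)

/-- `D = {i : 1 ≤ i ≤ 2^{n+1} - 3, i odd}`. -/
def oddD (n : ℕ) : Finset ℕ := oddUpTo (2 ^ (n + 1) - 3)

/-- The solution with `u_a = 1` and all other coordinates `0`. -/
def sol1 (a : ℕ) : ℕ → ℕ := fun d => if d = a then 1 else 0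

/-- The solution with `u_a = x`, `u_b = y` and all other coordinates `0`. -/
def sol2 (a x b y : ℕ) : ℕ → ℕ := fun d => if d = a then x else if d = b then y else 0

/-- The solution with `u_a = x`, `u_b = y`, `u_c = z` and all other coordinates `0`. -/
def sol3 (a x b y c z : ℕ) : ℕ → ℕ :=
  fun d => if d = a then x else if d = b then y else if d = c then z else 0

lemma sum_pow_range (m : ℕ) : ∑ x ∈ Finset.range m, 2 ^ x = 2 ^ m - 1 := by
  have := Nat.geomSum_eq (le_refl 2) m
  simpa using this

lemma carry_core (l : ℕ) (hl : 1 ≤ l) : ∀ s : ℕ, ∀ f : ℕ → ℕ,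
    ∑ x ∈ Finset.range l, f x = s → 0 < s →
    (2 ^ l - 1) ∣ ∑ x ∈ Finset.range l, f x * 2 ^ x →
    l ≤ s ∧ (s = l → ∀ x < l, f x = 1) := by
  intro s
  induction s using Nat.strong_induction_on with
  | _ s ih =>
  intro f hs hpos hdvd
  by_cases h : ∃ x < l, 2 ≤ f x
  · obtain ⟨x, hx, hfx⟩ := h
    set y := (x + 1) % l with hy
    have hyl : y < l := Nat.mod_lt _ hl
    obtain ⟨g, hgz⟩ : ∃ g : ℕ → ℕ, ∀ z, g z + (if z = x then 2 else 0)
        = f z + (if z = y then 1 else 0) := by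
      refine ⟨fun z => f z - (if z = x then 2 else 0) + (if z = y then 1 else 0), fun z => ?_⟩
      by_cases hz : z = x
      · subst hz; simp only [if_true]; omega
      · simp [hz]
    have h1 : ∑ z ∈ Finset.range l, g z + 2 = ∑ z ∈ Finset.range l, f z + 1 := by
      have := Finset.sum_congr (rfl : Finset.range l = Finset.range l) (fun z _ => hgz z)
      rw [Finset.sum_add_distrib, Finset.sum_add_distrib, Finset.sum_ite_eq',
        Finset.sum_ite_eq', if_pos (Finset.mem_range.2 hx),
        if_pos (Finset.mem_range.2 hyl)] at this
      exact this
    have h2 : ∑ z ∈ Finset.range l, g z * 2 ^ z + 2 * 2 ^ x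
        = ∑ z ∈ Finset.range l, f z * 2 ^ z + 2 ^ y := by
      have := Finset.sum_congr (rfl : Finset.range l = Finset.range l)
        (fun z _ => congrArg (· * 2 ^ z) (hgz z))
      simp only [add_mul, ite_mul, zero_mul, one_mul] at this
      rw [Finset.sum_add_distrib, Finset.sum_add_distrib, Finset.sum_ite_eq',
        Finset.sum_ite_eq', if_pos (Finset.mem_range.2 hx),
        if_pos (Finset.mem_range.2 hyl)] at this
      exact this
    have hfs : f x ≤ s := by
      rw [← hs]
      exact Finset.single_le_sum (f := f) (fun _ _ => Nat.zero_le _) (Finset.mem_range.2 hx)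
    have h3 : (2 ^ l - 1) ∣ ∑ z ∈ Finset.range l, g z * 2 ^ z := by
      have hpl : 1 ≤ 2 ^ l := Nat.one_le_two_pow
      rcases Nat.lt_or_ge (x + 1) l with h4 | h4
      · have : y = x + 1 := Nat.mod_eq_of_lt h4
        rw [this, pow_succ] at h2
        have : ∑ z ∈ Finset.range l, g z * 2 ^ z = ∑ z ∈ Finset.range l, f z * 2 ^ z := by omega
        rwa [this]
      · have h5 : x + 1 = l := by omega
        have : y = 0 := by rw [hy, h5, Nat.mod_self]
        rw [this] at h2
        have h6 : 2 * 2 ^ x = 2 ^ l := by rw [← h5, pow_succ]; ring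
        rw [h6] at h2
        have : ∑ z ∈ Finset.range l, f z * 2 ^ z
          = ∑ z ∈ Finset.range l, g z * 2 ^ z + (2 ^ l - 1) := by omega
        rw [this] at hdvd
        exact (Nat.dvd_add_left (dvd_refl _)).1 hdvd
    have := ih (s - 1) (by omega) g (by omega) (by omega) h3
    exact ⟨by omega, fun h => by omega⟩
  · push Not at h
    have hle : ∀ x ∈ Finset.range l, f x * 2 ^ x ≤ 2 ^ x := by
      intro x hx
      have := h x (Finset.mem_range.1 hx)
      have h1 : f x ≤ 1 := by omega
      nlinarith [Nat.one_le_two_pow (n := x)]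
    have hSpos : 0 < ∑ x ∈ Finset.range l, f x * 2 ^ x := by
      obtain ⟨x, hx, hx0⟩ : ∃ x ∈ Finset.range l, f x ≠ 0 := by
        by_contra hc
        push Not at hc
        rw [Finset.sum_eq_zero hc] at hs
        omega
      refine Finset.sum_pos' (fun _ _ => Nat.zero_le _) ⟨x, hx, ?_⟩
      positivity
    have h1 := Finset.sum_le_sum hle
    have h2 := Nat.le_of_dvd hSpos hdvd
    rw [sum_pow_range] at h1
    have h3 : ∑ x ∈ Finset.range l, f x * 2 ^ x = ∑ x ∈ Finset.range l, 2 ^ x := by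
      rw [sum_pow_range]; omega
    rw [Finset.sum_eq_sum_iff_of_le hle] at h3
    have h4 : ∀ x < l, f x = 1 := by
      intro x hx
      have := h3 x (Finset.mem_range.2 hx)
      exact Nat.eq_of_mul_eq_mul_right (Nat.two_pow_pos x) (by simpa using this)
    refine ⟨?_, fun _ => h4⟩
    rw [← hs, Finset.sum_congr rfl (fun x hx => h4 x (Finset.mem_range.1 hx))]
    simp

/-- Periodic bit function. -/
def Bt (l u : ℕ) (x : ℤ) : ℕ := (u.testBit (x % (l : ℤ)).toNat).toNat

lemma sum_bits (l : ℕ) : ∀ u : ℕ, u < 2 ^ l →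
    ∑ x ∈ Finset.range l, (u.testBit x).toNat * 2 ^ x = u := by
  induction l with
  | zero => intro u hu; simp at hu; simp [hu]
  | succ l ih =>
    intro u hu
    rw [Finset.sum_range_succ']
    have h1 := ih (u / 2) (by rw [pow_succ] at hu; omega)
    have h2 : ∑ x ∈ Finset.range l, (u.testBit (x + 1)).toNat * 2 ^ (x + 1) =
      2 * ∑ x ∈ Finset.range l, ((u / 2).testBit x).toNat * 2 ^ x := by
      rw [Finset.mul_sum]
      refine Finset.sum_congr rfl fun x _ => ?_
      rw [Nat.testBit_succ, pow_succ]; ring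
    rw [h2, h1, Nat.testBit_zero]
    rcases Nat.mod_two_eq_zero_or_one u with h | h <;> simp [h] <;> omega

lemma s2_bits (l : ℕ) : ∀ u : ℕ, u < 2 ^ l →
    ∑ x ∈ Finset.range l, (u.testBit x).toNat = s2 u := by
  induction l with
  | zero => intro u hu; simp at hu; simp [hu, s2]
  | succ l ih =>
    intro u hu
    rw [Finset.sum_range_succ']
    have h1 := ih (u / 2) (by rw [pow_succ] at hu; omega)
    simp only [Nat.testBit_succ]
    rw [h1, Nat.testBit_zero]
    rcases Nat.eq_zero_or_pos u with h0 | h0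
    · subst h0; simp [s2]
    · unfold s2
      rw [Nat.digits_def' (by norm_num) h0]
      rcases Nat.mod_two_eq_zero_or_one u with h | h <;> simp [h]
      omega

lemma Bt_nat (l u x : ℕ) (hx : x < l) : Bt l u x = (u.testBit x).toNat := by
  unfold Bt
  rw [← Int.natCast_mod, Int.toNat_natCast, Nat.mod_eq_of_lt hx]

lemma Bt_add_mul (l u : ℕ) (x c : ℤ) : Bt l u (x + l * c) = Bt l u x := by
  unfold Bt; rw [Int.add_mul_emod_self_left]

lemma Bt_congr (l u : ℕ) (x y : ℤ) (h : (l : ℤ) ∣ x - y) : Bt l u x = Bt l u y := by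
  obtain ⟨c, hc⟩ := h
  have : x = y + l * c := by omega
  rw [this, Bt_add_mul]

lemma Bt_le (l u : ℕ) (x : ℤ) : Bt l u x ≤ 1 := Bool.toNat_le _

lemma Bt_sum (l u : ℕ) (hu : u < 2 ^ l) :
    ∑ x ∈ Finset.range l, Bt l u (x : ℤ) * 2 ^ x = u := by
  refine Eq.trans ?_ (sum_bits l u hu)
  exact Finset.sum_congr rfl fun x hx => by rw [Bt_nat _ _ _ (Finset.mem_range.1 hx)]

lemma shift_sum (l : ℕ) (hl : 1 ≤ l) (B : ℤ → ℕ) (hB : ∀ x, B x ≤ 1)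
    (hper : ∀ x, B (x + l) = B x) :
    shift2 l (∑ x ∈ Finset.range l, B (x : ℤ) * 2 ^ x)
      = ∑ x ∈ Finset.range l, B ((x : ℤ) - 1) * 2 ^ x := by
  obtain ⟨m, rfl⟩ : ∃ m, l = m + 1 := ⟨l - 1, by omega⟩
  rw [Finset.sum_range_succ, Finset.sum_range_succ']
  set A := ∑ x ∈ Finset.range m, B (x : ℤ) * 2 ^ x with hA
  have hAl : A ≤ 2 ^ m - 1 := by
    rw [← sum_pow_range]
    refine Finset.sum_le_sum fun x _ => ?_
    have := hB x
    nlinarith [Nat.one_le_two_pow (n := x)]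
  have h2 : ∑ x ∈ Finset.range m, B (((x + 1 : ℕ) : ℤ) - 1) * 2 ^ (x + 1) = 2 * A := by
    rw [hA, Finset.mul_sum]
    refine Finset.sum_congr rfl fun x _ => ?_
    rw [pow_succ]; push_cast; rw [add_sub_cancel_right]; ring
  have h3 : B (((0 : ℕ) : ℤ) - 1) = B m := by
    rw [← hper]; congr 1; push_cast; ring
  rw [h2, h3]
  have hp : 1 ≤ 2 ^ m := Nat.one_le_two_pow
  unfold shift2
  have hb := hB m
  rw [pow_succ]
  interval_cases hbm : B (m : ℤ)
  · simp only [zero_mul, add_zero]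
    by_cases hc : A = 2 ^ m * 2 - 1
    · have : 2 ^ m = 1 := by omega
      rw [if_pos hc]; omega
    · rw [if_neg hc, Nat.mod_eq_of_lt (by omega)]
  · simp only [one_mul, pow_zero]
    by_cases hc : A + 2 ^ m = 2 ^ m * 2 - 1
    · rw [if_pos hc]; omega
    · rw [if_neg hc, Nat.mod_eq_sub_mod (by omega), Nat.mod_eq_of_lt (by omega)]; omega

lemma shift_iter (l : ℕ) (hl : 1 ≤ l) (u : ℕ) (hu : u < 2 ^ l) (k : ℕ) :
    (shift2 l)^[k] u = ∑ x ∈ Finset.range l, Bt l u ((x : ℤ) - k) * 2 ^ x := by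
  induction k with
  | zero => simp [Bt_sum l u hu]
  | succ k ih =>
    rw [Function.iterate_succ_apply', ih,
      shift_sum l hl (fun x => Bt l u (x - k)) (fun _ => Bt_le _ _ _)
        (fun x => Bt_congr _ _ _ _ ⟨1, by ring⟩)]
    refine Finset.sum_congr rfl fun x _ => ?_
    congr 2; push_cast; ring

lemma shift_modEq (l u k : ℕ) : (shift2 l)^[k] u ≡ 2 ^ k * u [MOD 2 ^ l - 1] := by
  induction k with
  | zero => simp [Nat.ModEq]
  | succ k ih =>
    rw [Function.iterate_succ_apply']
    have h : ∀ v, shift2 l v ≡ 2 * v [MOD 2 ^ l - 1] := by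
      intro v
      unfold shift2
      split_ifs with hv
      · subst hv; simp [Nat.ModEq]
      · exact Nat.mod_modEq _ _
    refine (h _).trans ?_
    rw [pow_succ, mul_comm (2 ^ k) 2, mul_assoc]
    exact Nat.ModEq.mul_left 2 ih

lemma sum_periodic (l : ℕ) (B : ℤ → ℕ) (hper : ∀ x, B (x + l) = B x) (j : ℕ) :
    ∑ x ∈ Finset.range l, B ((x : ℤ) - j) = ∑ x ∈ Finset.range l, B (x : ℤ) := by
  induction j with
  | zero => simp
  | succ j ih =>
    rw [← ih]
    rcases l with _ | m
    · simp
    rw [Finset.sum_range_succ', Finset.sum_range_succ]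
    congr 1
    · refine Finset.sum_congr rfl fun x _ => ?_
      congr 1; push_cast; ring
    · rw [← hper]; congr 1; push_cast; ring

lemma Bt_count (l u : ℕ) (hu : u < 2 ^ l) (j : ℕ) :
    ∑ x ∈ Finset.range l, Bt l u ((x : ℤ) - j) = s2 u := by
  rw [sum_periodic l (Bt l u) (fun x => Bt_congr _ _ _ _ ⟨1, by ring⟩), ← s2_bits l u hu]
  exact Finset.sum_congr rfl fun x hx => by rw [Bt_nat _ _ _ (Finset.mem_range.1 hx)]

lemma mem_oddD (n d : ℕ) : d ∈ oddD n ↔ d < 2 ^ (n + 1) - 3 + 1 ∧ d % 2 = 1 := by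
  simp [oddD, oddUpTo]

lemma oddD_lt {n d : ℕ} (hn : 1 ≤ n) (h : d ∈ oddD n) : d < 2 ^ (n + 1) - 1 := by
  rw [mem_oddD] at h
  have : 2 ^ 2 ≤ 2 ^ (n + 1) := Nat.pow_le_pow_right (by norm_num) (by omega)
  omega

lemma s2_oddD {n d : ℕ} (hn : 1 ≤ n) (h : d ∈ oddD n) :
    s2 d ≤ n ∧ (s2 d = n → ∃ i, 1 ≤ i ∧ i ≤ n ∧ d + 2 ^ i = 2 ^ (n + 1) - 1 ∧
      ∀ j ≤ n, (d.testBit j).toNat = if j = i then 0 else 1) := by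
  have hlt := oddD_lt hn h
  have hb := sum_bits (n + 1) d (by omega)
  have hs := s2_bits (n + 1) d (by omega)
  have hex : ∃ i ∈ Finset.range (n + 1), d.testBit i = false := by
    by_contra hc
    push Not at hc
    have : ∑ x ∈ Finset.range (n + 1), (d.testBit x).toNat * 2 ^ x = 2 ^ (n + 1) - 1 := by
      rw [← sum_pow_range]
      refine Finset.sum_congr rfl fun x hx => ?_
      have := hc x hx
      simp at this
      simp [this]
    omega
  obtain ⟨i, hi, hdi⟩ := hex
  rw [← Finset.add_sum_erase _ _ hi, hdi] at hs hb
  simp only [Bool.toNat_false, zero_add, zero_mul] at hs hb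
  have hcard : ((Finset.range (n + 1)).erase i).card = n := by
    rw [Finset.card_erase_of_mem hi]; simp
  have hle : ∀ x ∈ (Finset.range (n + 1)).erase i, (d.testBit x).toNat ≤ 1 :=
    fun x _ => Bool.toNat_le _
  have hsum1 : ∑ x ∈ (Finset.range (n + 1)).erase i, 1 = n := by
    rw [Finset.sum_const, hcard]; simp
  refine ⟨?_, fun hsn => ?_⟩
  · have := Finset.sum_le_sum hle
    omega
  · have h3 : ∑ x ∈ (Finset.range (n + 1)).erase i, (d.testBit x).toNat
      = ∑ x ∈ (Finset.range (n + 1)).erase i, 1 := by rw [hsum1, hs, hsn]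
    rw [Finset.sum_eq_sum_iff_of_le hle] at h3
    have hall : ∀ j ≤ n, (d.testBit j).toNat = if j = i then 0 else 1 := by
      intro j hj
      split_ifs with hji
      · rw [hji, hdi]; rfl
      · exact h3 j (Finset.mem_erase.2 ⟨hji, Finset.mem_range.2 (by omega)⟩)
    refine ⟨i, ?_, ?_, ?_, hall⟩
    · by_contra hc
      have : i = 0 := by omega
      subst this
      have := ((mem_oddD n d).1 h).2
      rw [Nat.testBit_zero, this] at hdi
      simp at hdi
    · have := Finset.mem_range.1 hi; omega
    · rw [← sum_pow_range, ← Finset.add_sum_erase _ _ hi, add_comm]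
      congr 1
      rw [← hb]
      refine Finset.sum_congr rfl fun x hx => ?_
      rw [h3 x hx]; ring

/-- Covering number of cell `y`. -/
def cov (n l : ℕ) (U : ℕ → ℕ) (y : ℤ) : ℕ :=
  ∑ d ∈ oddD n, ∑ j ∈ Finset.range (n + 1), (d.testBit j).toNat * Bt l (U d) (y - j)

lemma cov_per (n l : ℕ) (U : ℕ → ℕ) (y : ℤ) (c : ℤ) : cov n l U (y + l * c) = cov n l U y := by
  unfold cov
  refine Finset.sum_congr rfl fun d _ => Finset.sum_congr rfl fun j _ => ?_
  congr 1
  exact Bt_congr _ _ _ _ ⟨c, by ring⟩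

lemma cov_sum (n l : ℕ) (hn : 1 ≤ n) (U : ℕ → ℕ) (hU : ∀ d, U d < 2 ^ l) :
    ∑ y ∈ Finset.range l, cov n l U (y : ℤ) = ∑ d ∈ oddD n, s2 d * s2 (U d) := by
  unfold cov
  rw [Finset.sum_comm]
  refine Finset.sum_congr rfl fun d hd => ?_
  rw [Finset.sum_comm]
  rw [← s2_bits (n + 1) d (by have := oddD_lt hn hd; omega), Finset.sum_mul]
  refine Finset.sum_congr rfl fun j _ => ?_
  rw [← Finset.mul_sum, Bt_count _ _ (hU d)]

lemma cov_modEq (n l : ℕ) (hn : 1 ≤ n) (hl : 1 ≤ l) (U : ℕ → ℕ) (hU : ∀ d, U d < 2 ^ l) :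
    ∑ y ∈ Finset.range l, cov n l U (y : ℤ) * 2 ^ y ≡ ∑ d ∈ oddD n, d * U d
      [MOD 2 ^ l - 1] := by
  have h1 : ∑ y ∈ Finset.range l, cov n l U (y : ℤ) * 2 ^ y
      = ∑ d ∈ oddD n, ∑ j ∈ Finset.range (n + 1),
          (d.testBit j).toNat * (shift2 l)^[j] (U d) := by
    unfold cov
    simp only [Finset.sum_mul]
    rw [Finset.sum_comm]
    refine Finset.sum_congr rfl fun d hd => ?_
    rw [Finset.sum_comm]
    refine Finset.sum_congr rfl fun j _ => ?_
    rw [shift_iter l hl _ (hU d), Finset.mul_sum]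
    exact Finset.sum_congr rfl fun y _ => by ring
  have h2 : ∑ d ∈ oddD n, d * U d = ∑ d ∈ oddD n, ∑ j ∈ Finset.range (n + 1),
      (d.testBit j).toNat * (2 ^ j * U d) := by
    refine Finset.sum_congr rfl fun d hd => ?_
    have hd2 := congrArg (· * U d) (sum_bits (n + 1) d (by have := oddD_lt hn hd; omega))
    rw [← hd2, Finset.sum_mul]
    exact Finset.sum_congr rfl fun j _ => by ring
  rw [h1, h2]
  refine Nat.ModEq.sum fun d _ => Nat.ModEq.sum fun j _ => ?_
  exact Nat.ModEq.mul_left _ (shift_modEq _ _ _)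

lemma s2_pos {u : ℕ} (hu : 0 < u) : 0 < s2 u := by
  by_contra hc
  have hc : s2 u = 0 := by omega
  have h1 := s2_bits u u Nat.lt_two_pow_self
  have h2 := sum_bits u u Nat.lt_two_pow_self
  rw [hc, Finset.sum_eq_zero_iff] at h1
  rw [Finset.sum_eq_zero (fun x hx => by rw [h1 x hx]; simp)] at h2
  omega

lemma sol_main (n l : ℕ) (hn : 1 ≤ n) (U : ℕ → ℕ) (h : IsSolution (oddD n) l U) :
    l ≤ n * weight (oddD n) U ∧ (n * weight (oddD n) U = l →
      (∀ y : ℤ, cov n l U y = 1) ∧ ∀ d ∈ oddD n, 0 < U d → s2 d = n) := by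
  have hl := h.len_pos
  have hU : ∀ d, U d < 2 ^ l := fun d => by
    have := h.bounded d
    have := Nat.one_le_two_pow (n := l)
    omega
  have hle : ∀ d ∈ oddD n, s2 d * s2 (U d) ≤ n * s2 (U d) := fun d hd =>
    Nat.mul_le_mul_right _ (s2_oddD hn hd).1
  have hsum := Finset.sum_le_sum hle
  have hw : ∑ d ∈ oddD n, n * s2 (U d) = n * weight (oddD n) U := by
    rw [weight, Finset.mul_sum]
  rw [hw] at hsum
  have hpos : 0 < ∑ d ∈ oddD n, s2 d * s2 (U d) := by
    have := h.pos
    obtain ⟨d, hd, hd0⟩ : ∃ d ∈ oddD n, 0 < d * U d := by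
      by_contra hc
      push Not at hc
      rw [Finset.sum_eq_zero (fun d hd => Nat.le_zero.1 (hc d hd))] at this
      omega
    refine Finset.sum_pos' (fun _ _ => Nat.zero_le _) ⟨d, hd, ?_⟩
    exact Nat.mul_pos (s2_pos (Nat.pos_of_mul_pos_right hd0)) (s2_pos (Nat.pos_of_mul_pos_left hd0))
  have hc := carry_core l hl _ (fun y => cov n l U (y : ℤ)) (cov_sum n l hn U hU) hpos
    ((cov_modEq n l hn hl U hU).dvd_iff (dvd_refl _) |>.2 h.dvd)
  refine ⟨hc.1.trans hsum, fun heq => ?_⟩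
  have heq2 : ∑ d ∈ oddD n, s2 d * s2 (U d) = l := by omega
  refine ⟨fun y => ?_, fun d hd hd0 => ?_⟩
  · have h1 := hc.2 heq2 (y % l).toNat (by
      have := Int.emod_lt_of_pos y (b := l) (by omega)
      omega)
    have h2 : ((y % l).toNat : ℤ) = y % l := Int.toNat_of_nonneg (Int.emod_nonneg _ (by omega))
    simp only [h2] at h1
    rw [← h1, ← cov_per n l U (y % l) (y / l), Int.emod_add_mul_ediv]
  · have h3 : ∑ d ∈ oddD n, s2 d * s2 (U d) = ∑ d ∈ oddD n, n * s2 (U d) := by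
      rw [hw]; omega
    rw [Finset.sum_eq_sum_iff_of_le hle] at h3
    exact Nat.eq_of_mul_eq_mul_right (s2_pos hd0) (h3 d hd)

lemma phi_boundary (n l : ℕ) (hn : 1 ≤ n) (hl : 1 ≤ l) (U : ℕ → ℕ) (hU : ∀ d, U d < 2 ^ l)
    (hcov : ∀ y, cov n l U y = 1) (r : ℤ)
    (hr : ∀ d ∈ oddD n, ∀ j ≤ n, d.testBit j = true → ∀ r' : ℤ, r' < r → r ≤ r' + j →
      Bt l (U d) r' = 0) :
    supportMap (oddD n) l U ((-r) % l).toNat = 1 := by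
  unfold supportMap
  have hk : (((-r) % (l : ℤ)).toNat : ℤ) = (-r) % l :=
    Int.toNat_of_nonneg (Int.emod_nonneg _ (by omega))
  have hp : 1 < 2 ^ l := Nat.one_lt_two_pow (by omega)
  suffices hS : ∑ d ∈ oddD n, d * (shift2 l)^[((-r) % (l : ℤ)).toNat] (U d) = 2 ^ l - 1 by
    rw [hS]; exact Nat.div_self (by omega)
  have h1 : ∀ d ∈ oddD n, d * (shift2 l)^[((-r) % (l : ℤ)).toNat] (U d)
      = ∑ j ∈ Finset.range (n + 1), ∑ y ∈ Finset.range l,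
        (d.testBit j).toNat * Bt l (U d) (((y : ℤ) + r) - j) * 2 ^ y := by
    intro d hd
    have hsh : (shift2 l)^[((-r) % (l : ℤ)).toNat] (U d)
        = ∑ x ∈ Finset.range l, Bt l (U d) ((x : ℤ) + r) * 2 ^ x := by
      rw [shift_iter l hl _ (hU d)]
      refine Finset.sum_congr rfl fun x _ => ?_
      congr 1
      apply Bt_congr
      rw [hk]
      refine ⟨(-r) / l, ?_⟩
      have := Int.emod_add_mul_ediv (-r) l
      linarith
    rw [hsh]
    have hd2 := congrArg (· * ∑ x ∈ Finset.range l, Bt l (U d) ((x : ℤ) + r) * 2 ^ x)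
      (sum_bits (n + 1) d (by have := oddD_lt hn hd; omega))
    rw [← hd2, Finset.sum_mul]
    refine Finset.sum_congr rfl fun j hj => ?_
    have hj : j ≤ n := by have := Finset.mem_range.1 hj; omega
    rcases hb : d.testBit j with _ | _
    · simp
    simp only [Bool.toNat_true, one_mul]
    set G : ℕ → ℕ := fun y => Bt l (U d) (((y : ℤ) + r) - j) * 2 ^ y with hG
    have e1 := Finset.sum_range_add G j l
    have e2 := Finset.sum_range_add G l j
    have z1 : ∑ x ∈ Finset.range j, G x = 0 := by
      refine Finset.sum_eq_zero fun x hx => ?_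
      have := Finset.mem_range.1 hx
      simp only [hG]
      rw [hr d hd j hj hb _ (by omega) (by omega), zero_mul]
    have z2 : ∑ x ∈ Finset.range j, G (l + x) = 0 := by
      refine Finset.sum_eq_zero fun x hx => ?_
      have := Finset.mem_range.1 hx
      simp only [hG]
      rw [Bt_congr l (U d) _ (((x : ℤ) + r) - j) ⟨1, by push_cast; ring⟩,
        hr d hd j hj hb _ (by omega) (by omega), zero_mul]
    rw [add_comm j l] at e1
    have e3 : ∑ x ∈ Finset.range l, G x = ∑ x ∈ Finset.range l, G (j + x) := by omega
    rw [e3, Finset.mul_sum]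
    refine Finset.sum_congr rfl fun x _ => ?_
    simp only [hG]
    have : (((j + x : ℕ) : ℤ) + r) - j = x + r := by push_cast; ring
    rw [this, pow_add]; ring
  rw [Finset.sum_congr rfl h1, ← sum_pow_range]
  have h2 : ∀ y ∈ Finset.range l, 2 ^ y = cov n l U ((y : ℤ) + r) * 2 ^ y := by
    intro y _; rw [hcov]; ring
  rw [Finset.sum_congr rfl h2]
  unfold cov
  simp only [Finset.sum_mul]
  conv_rhs => rw [Finset.sum_comm]
  refine Finset.sum_congr rfl fun d _ => ?_
  rw [Finset.sum_comm]

/-- Block predicate: either a single interval tile or an interlocked pair. -/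
def Blk (n : ℕ) (Q : ℕ → ℤ → Prop) (r : ℤ) (L : ℕ) : Prop :=
  (L = n ∧ Q n r) ∨ (L = 2 * n ∧ Q (n - 1) r ∧ Q 1 (r + n - 1))

lemma tiling_block (n : ℕ) (hn : 3 ≤ n) (Q : ℕ → ℤ → Prop)
    (hQ : ∀ i r, Q i r → 1 ≤ i ∧ i ≤ n)
    (hcov : ∀ y : ℤ, ∃ i j : ℕ, j ≤ n ∧ j ≠ i ∧ Q i (y - j))
    (huniq : ∀ (i i' : ℕ) (r r' : ℤ) (j j' : ℕ), Q i r → Q i' r' → j ≤ n → j' ≤ n → j ≠ i →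
      j' ≠ i' → r + j = r' + j' → i = i' ∧ r = r') :
    ∃ r L, Blk n Q r L := by
  have pair : ∀ i r, Q i r → i = n ∨ (i = n - 1 ∧ Q 1 (r + n - 1)) ∨
      (i = 1 ∧ Q (n - 1) (r - n + 1)) := by
    intro i r h
    obtain ⟨hi1, hin⟩ := hQ i r h
    by_cases hieq : i = n
    · exact Or.inl hieq
    right
    obtain ⟨i', j', hj', hji', h'⟩ := hcov (r + i)
    obtain ⟨hi1', hin'⟩ := hQ _ _ h'
    have hne : ¬ (i = i' ∧ r = r + i - j') := by omega
    have hlow : j' = 0 ∨ j' = i' + 1 := by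
      by_contra hc
      exact hne (huniq i i' r _ (i - 1) (j' - 1) h h' (by omega) (by omega) (by omega) (by omega)
        (by omega))
    have hhigh : j' = n ∨ j' + 1 = i' := by
      by_contra hc
      exact hne (huniq i i' r _ (i + 1) (j' + 1) h h' (by omega) (by omega) (by omega) (by omega)
        (by omega))
    rcases hlow with h0 | h0
    · left
      have hi'1 : i' = 1 := by omega
      have : i = n - 1 := by
        by_contra hc
        exact hne (huniq i i' r _ (i + 2) 2 h h' (by omega) (by omega) (by omega) (by omega)
          (by omega))
      refine ⟨this, ?_⟩
      rw [hi'1] at h'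
      convert h' using 1
      omega
    · right
      have hi'1 : i' = n - 1 := by omega
      have : i = 1 := by
        by_contra hc
        exact hne (huniq i i' r _ (i - 2) (n - 2) h h' (by omega) (by omega) (by omega) (by omega)
          (by omega))
      refine ⟨this, ?_⟩
      rw [hi'1] at h'
      convert h' using 1
      omega
  obtain ⟨i, j, -, -, h⟩ := hcov 0
  rcases pair _ _ h with h1 | ⟨h1, h2⟩ | ⟨h1, h2⟩
  · subst h1; exact ⟨_, _, Or.inl ⟨rfl, h⟩⟩
  · subst h1; exact ⟨_, _, Or.inr ⟨rfl, h, h2⟩⟩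
  · subst h1
    refine ⟨_, _, Or.inr ⟨rfl, h2, ?_⟩⟩
    convert h using 1
    ring

lemma inblock (n : ℕ) (hn : 3 ≤ n) (Q : ℕ → ℤ → Prop)
    (huniq : ∀ (i i' : ℕ) (r r' : ℤ) (j j' : ℕ), Q i r → Q i' r' → j ≤ n → j' ≤ n → j ≠ i →
      j' ≠ i' → r + j = r' + j' → i = i' ∧ r = r')
    (r : ℤ) (L : ℕ) (hB : Blk n Q r L) (i' : ℕ) (r' : ℤ) (j' : ℕ) (h' : Q i' r')
    (hj' : j' ≤ n) (hji : j' ≠ i') (h1 : r ≤ r' + j') (h2 : r' + j' < r + L) :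
    (L = n ∧ i' = n ∧ r' = r) ∨
    (L = 2 * n ∧ ((i' = n - 1 ∧ r' = r) ∨ (i' = 1 ∧ r' = r + n - 1))) := by
  obtain ⟨t, ht⟩ : ∃ t : ℕ, (t : ℤ) = r' + j' - r := ⟨(r' + j' - r).toNat, by omega⟩
  rcases hB with ⟨hL, hq⟩ | ⟨hL, hq1, hq2⟩
  · left
    have := huniq n i' r r' t j' hq h' (by omega) (by omega) (by omega) (by omega) (by omega)
    omega
  · right
    refine ⟨hL, ?_⟩
    by_cases ht1 : t ≤ n ∧ t ≠ n - 1
    · have := huniq (n - 1) i' r r' t j' hq1 h' (by omega) (by omega) (by omega) (by omega)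
        (by omega)
      omega
    · have := huniq 1 i' _ r' (t - (n - 1)) j' hq2 h' (by omega) (by omega) (by omega) (by omega)
        (by omega)
      omega

lemma nostraddle (n : ℕ) (hn : 3 ≤ n) (Q : ℕ → ℤ → Prop)
    (hQ : ∀ i r, Q i r → 1 ≤ i ∧ i ≤ n)
    (huniq : ∀ (i i' : ℕ) (r r' : ℤ) (j j' : ℕ), Q i r → Q i' r' → j ≤ n → j' ≤ n → j ≠ i →
      j' ≠ i' → r + j = r' + j' → i = i' ∧ r = r')
    (r : ℤ) (L : ℕ) (hB : Blk n Q r L) (i' : ℕ) (r' : ℤ) (j' : ℕ) (h' : Q i' r')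
    (hj' : j' ≤ n) (hji : j' ≠ i') :
    ¬ (r' < r ∧ r ≤ r' + j') ∧ ¬ (r' < r + L ∧ r + L ≤ r' + j') := by
  have hL : L = n ∨ L = 2 * n := by
    rcases hB with ⟨hL, _⟩ | ⟨hL, _⟩
    · exact Or.inl hL
    · exact Or.inr hL
  constructor
  · rintro ⟨h1, h2⟩
    have := inblock n hn Q huniq r L hB i' r' j' h' hj' hji h2 (by omega)
    omega
  · rintro ⟨h1, h2⟩
    have hi := hQ _ _ h'
    have := inblock n hn Q huniq r L hB i' r' 0 h' (by omega) (by omega) (by push_cast; omega)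
      (by push_cast; omega)
    omega

/-- The element of `oddD n` with the single hole `i`. -/
def dd (n i : ℕ) : ℕ := 2 ^ (n + 1) - 1 - 2 ^ i

lemma dd_inj (n i i' : ℕ) (hi : i ≤ n) (hi' : i' ≤ n) (h : dd n i = dd n i') : i = i' := by
  unfold dd at h
  have h1 : 2 ^ i ≤ 2 ^ n := Nat.pow_le_pow_right (by norm_num) hi
  have h2 : 2 ^ i' ≤ 2 ^ n := Nat.pow_le_pow_right (by norm_num) hi'
  have h3 : 1 ≤ 2 ^ n := Nat.one_le_two_pow
  rw [pow_succ] at h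
  have : 2 ^ i = 2 ^ i' := by omega
  exact Nat.pow_right_injective (le_refl 2) this

lemma Bt_ne_pos {l u : ℕ} {x : ℤ} (h : Bt l u x ≠ 0) : 0 < u := by
  rcases Nat.eq_zero_or_pos u with h0 | h0
  · subst h0; simp [Bt] at h
  · exact h0

lemma Bt_zero {l u : ℕ} (hu : u < 2 ^ l) (h : ∀ x : ℤ, Bt l u x = 0) : u = 0 := by
  rw [← Bt_sum l u hu]
  exact Finset.sum_eq_zero fun x _ => by rw [h, zero_mul]

lemma Bt_single {l u : ℕ} (hl : 1 ≤ l) (hu : u < 2 ^ l) (e : ℕ)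
    (h : ∀ x : ℤ, Bt l u x ≠ 0 ↔ (l : ℤ) ∣ x - e) : u = 2 ^ (e % l) := by
  have hlt : e % l < l := Nat.mod_lt _ hl
  have hdiv := Nat.mod_add_div e l
  rw [← Bt_sum l u hu, Finset.sum_eq_single (e % l)]
  · have h1 : Bt l u ((e % l : ℕ) : ℤ) ≠ 0 := by
      rw [h]
      refine ⟨-((e / l : ℕ) : ℤ), ?_⟩
      have : ((e % l : ℕ) : ℤ) + l * ((e / l : ℕ) : ℤ) = e := by exact_mod_cast hdiv
      linarith
    have h2 := Bt_le l u ((e % l : ℕ) : ℤ)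
    have : Bt l u ((e % l : ℕ) : ℤ) = 1 := by omega
    rw [this, one_mul]
  · intro x hx hne
    have hx := Finset.mem_range.1 hx
    by_contra hc
    have h1 : Bt l u (x : ℤ) ≠ 0 := fun h0 => hc (by rw [h0, zero_mul])
    rw [h] at h1
    have h3 : x ≡ e [MOD l] := ((Nat.modEq_iff_dvd).2 h1).symm
    apply hne
    rw [← Nat.mod_eq_of_lt hx]
    exact h3
  · intro hc; exact absurd (Finset.mem_range.2 hlt) hc

lemma shift_pow1 (l : ℕ) (b : ℕ) (hb : b < l) : shift2 l (2 ^ b) = 2 ^ ((b + 1) % l) := by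
  unfold shift2
  rcases Nat.lt_or_ge (b + 1) l with h | h
  · have h1 : 2 ^ (b + 2) ≤ 2 ^ l := Nat.pow_le_pow_right (by norm_num) (by omega)
    have h2 : 1 ≤ 2 ^ b := Nat.one_le_two_pow
    rw [pow_add] at h1
    rw [if_neg (by omega), Nat.mod_eq_of_lt (by omega), Nat.mod_eq_of_lt h, pow_succ, mul_comm]
  · have h0 : l = b + 1 := by omega
    subst h0
    rw [Nat.mod_self, pow_succ]
    have h2 : 1 ≤ 2 ^ b := Nat.one_le_two_pow
    split_ifs with hc
    · omega
    · have : 2 * 2 ^ b = 1 + (2 ^ b * 2 - 1) := by omega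
      rw [this, Nat.add_mod_right, Nat.mod_eq_of_lt (by omega)]; rfl

lemma shift_powk (l a k : ℕ) (ha : a < l) :
    (shift2 l)^[k] (2 ^ a) = 2 ^ ((a + k) % l) := by
  induction k with
  | zero => simp [Nat.mod_eq_of_lt ha]
  | succ k ih =>
    rw [Function.iterate_succ_apply', ih, shift_pow1 _ _ (Nat.mod_lt _ (by omega))]
    congr 1
    rw [Nat.mod_add_mod, add_assoc]

lemma shift_zero (l k : ℕ) (hl : 1 ≤ l) : (shift2 l)^[k] 0 = 0 := by
  have h : shift2 l 0 = 0 := by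
    unfold shift2; simp
  exact Function.iterate_fixed h k

lemma uniqueness (n : ℕ) (hn : 3 ≤ n) (l : ℕ) (U : ℕ → ℕ) (h : IsSolution (oddD n) l U)
    (hirr : IrreducibleSol (oddD n) l U) (heq : n * weight (oddD n) U = l) :
    (l = n ∧ IsShiftOf n U (sol1 (2 ^ n - 1))) ∨
    (l = 2 * n ∧
      IsShiftOf (2 * n) U (sol2 (2 ^ (n + 1) - 3) (2 ^ (n - 1)) (3 * 2 ^ (n - 1) - 1) 1)) := by
  have hl := h.len_pos
  have hU : ∀ d, U d < 2 ^ l := fun d => by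
    have := h.bounded d
    have := Nat.one_le_two_pow (n := l)
    omega
  obtain ⟨hcov, hs⟩ := (sol_main n l (by omega) U h).2 heq
  have htile : ∀ d x, Bt l (U d) x ≠ 0 → d ∈ oddD n ∧ ∃ i, 1 ≤ i ∧ i ≤ n ∧ d = dd n i ∧
      ∀ j ≤ n, (d.testBit j).toNat = if j = i then 0 else 1 := by
    intro d x hx
    have hpos := Bt_ne_pos hx
    have hd : d ∈ oddD n := by
      by_contra hc
      have := h.supp_sub d hc
      omega
    refine ⟨hd, ?_⟩
    obtain ⟨i, h1, h2, h3, h4⟩ := (s2_oddD (by omega) hd).2 (hs d hd hpos)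
    exact ⟨i, h1, h2, Nat.eq_sub_of_add_eq h3, h4⟩
  set Q : ℕ → ℤ → Prop := fun i r => 1 ≤ i ∧ i ≤ n ∧ Bt l (U (dd n i)) r ≠ 0 with hQdef
  have hQ : ∀ i r, Q i r → 1 ≤ i ∧ i ≤ n := fun i r hq => ⟨hq.1, hq.2.1⟩
  have hQbit : ∀ i r, Q i r → dd n i ∈ oddD n ∧
      ∀ j ≤ n, ((dd n i).testBit j).toNat = if j = i then 0 else 1 := by
    intro i r hq
    obtain ⟨hd, i0, h1, h2, h3, h4⟩ := htile _ _ hq.2.2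
    have := dd_inj n i i0 hq.2.1 h2 h3
    subst this
    exact ⟨hd, h4⟩
  have hcovP : ∀ y : ℤ, ∑ p ∈ oddD n ×ˢ Finset.range (n + 1),
      (p.1.testBit p.2).toNat * Bt l (U p.1) (y - p.2) = 1 := by
    intro y
    rw [Finset.sum_product]
    exact hcov y
  have hcovQ : ∀ y : ℤ, ∃ i j : ℕ, j ≤ n ∧ j ≠ i ∧ Q i (y - j) := by
    intro y
    obtain ⟨p, hp, hp0⟩ := Finset.exists_ne_zero_of_sum_ne_zero
      (by rw [hcovP y]; norm_num : ∑ p ∈ oddD n ×ˢ Finset.range (n + 1),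
      (p.1.testBit p.2).toNat * Bt l (U p.1) (y - p.2) ≠ 0)
    rw [Finset.mem_product, Finset.mem_range] at hp
    have hb1 := left_ne_zero_of_mul hp0
    have hb2 := right_ne_zero_of_mul hp0
    obtain ⟨hd, i, h1, h2, h3, h4⟩ := htile _ _ hb2
    rw [h4 p.2 (by omega)] at hb1
    refine ⟨i, p.2, by omega, ?_, h1, h2, ?_⟩
    · intro hc; simp [hc] at hb1
    · rw [← h3]; exact hb2
  have huniq : ∀ (i i' : ℕ) (r r' : ℤ) (j j' : ℕ), Q i r → Q i' r' → j ≤ n → j' ≤ n → j ≠ i →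
      j' ≠ i' → r + j = r' + j' → i = i' ∧ r = r' := by
    intro i i' r r' j j' hq hq' hj hj' hji hji' he
    obtain ⟨hd, hb⟩ := hQbit i r hq
    obtain ⟨hd', hb'⟩ := hQbit i' r' hq'
    by_cases hp : (dd n i, j) = (dd n i', j')
    · rw [Prod.mk.injEq] at hp
      have := dd_inj n i i' hq.2.1 hq'.2.1 hp.1
      omega
    · exfalso
      have hsub : ({(dd n i, j), (dd n i', j')} : Finset (ℕ × ℕ)) ⊆
          oddD n ×ˢ Finset.range (n + 1) := by
        intro p hp
        simp only [Finset.mem_insert, Finset.mem_singleton] at hp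
        rcases hp with rfl | rfl
        · exact Finset.mem_product.2 ⟨hd, Finset.mem_range.2 (by omega)⟩
        · exact Finset.mem_product.2 ⟨hd', Finset.mem_range.2 (by omega)⟩
      have h1 := Finset.sum_le_sum_of_subset (f := fun p : ℕ × ℕ =>
        (p.1.testBit p.2).toNat * Bt l (U p.1) ((r + j) - p.2)) hsub
      rw [hcovP (r + j), Finset.sum_pair hp] at h1
      simp only at h1
      rw [hb j hj, hb' j' hj', if_neg hji, if_neg hji'] at h1
      have e1 : r + j - j = r := by ring
      have e2 : r + j - j' = r' := by rw [he]; ring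
      rw [e1, e2] at h1
      have h2 := hq.2.2
      have h3 := hq'.2.2
      omega
  obtain ⟨r, L, hB⟩ := tiling_block n hn Q hQ hcovQ huniq
  have hns := nostraddle n hn Q hQ huniq r L hB
  have hnsd : ∀ d ∈ oddD n, ∀ j ≤ n, d.testBit j = true → ∀ r' : ℤ, Bt l (U d) r' ≠ 0 →
      ¬ (r' < r ∧ r ≤ r' + j) ∧ ¬ (r' < r + L ∧ r + L ≤ r' + j) := by
    intro d hd j hj hb r' hr'
    obtain ⟨-, i, h1, h2, h3, h4⟩ := htile _ _ hr'
    refine hns i r' j ⟨h1, h2, h3 ▸ hr'⟩ hj ?_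
    intro hc
    have := h4 j hj
    rw [hb, if_pos hc] at this
    simp at this
  have hp1 := phi_boundary n l (by omega) hl U hU hcov r (by
    intro d hd j hj hb r' h1 h2
    by_contra hc
    exact (hnsd d hd j hj hb r' hc).1 ⟨h1, h2⟩)
  have hp2 := phi_boundary n l (by omega) hl U hU hcov (r + L) (by
    intro d hd j hj hb r' h1 h2
    by_contra hc
    exact (hnsd d hd j hj hb r' hc).2 ⟨h1, h2⟩)
  have hmem : ∀ z : ℤ, (z % (l : ℤ)).toNat ∈ (↑(Finset.range l) : Set ℕ) := by
    intro z
    have := Int.emod_lt_of_pos z (b := l) (by omega)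
    simp only [Finset.coe_range, Set.mem_Iio]
    omega
  have hkk := hirr (hmem _) (hmem _) (hp1.trans hp2.symm)
  have hdvd : l ∣ L := by
    have a1 := Int.emod_nonneg (-r) (b := l) (by omega)
    have a2 := Int.emod_nonneg (-(r + L)) (b := l) (by omega)
    have a3 : (-r) % (l : ℤ) = (-(r + L)) % l := by omega
    have a4 := (Int.emod_emod_of_dvd _ (dvd_refl (l : ℤ)) : (-r) % (l : ℤ) % l = _)
    have a5 : (l : ℤ) ∣ (-r) - (-(r + L)) := Int.ModEq.dvd (Eq.symm a3)
    have a6 : (-r) - (-(r + (L : ℤ))) = L := by ring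
    rw [a6] at a5
    exact_mod_cast a5
  have hQper : ∀ i x c, Q i x → Q i (x + l * c) := by
    intro i x c hq
    exact ⟨hq.1, hq.2.1, by rw [Bt_add_mul]; exact hq.2.2⟩
  have hLl : L = l := by
    obtain ⟨c, hc⟩ := hdvd
    set w := weight (oddD n) U
    have hw : 1 ≤ w := by
      rcases Nat.eq_zero_or_pos w with h0 | h0
      · rw [h0] at heq; omega
      · exact h0
    rcases hB with ⟨hL, hq⟩ | ⟨hL, hq1, hq2⟩
    · have : l ≤ L := Nat.le_of_dvd (by omega) ⟨c, hc⟩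
      have : n * 1 ≤ n * w := Nat.mul_le_mul_left _ hw
      omega
    · have h1 : l ≤ L := Nat.le_of_dvd (by omega) ⟨c, hc⟩
      rcases Nat.lt_or_ge w 2 with h2 | h2
      · exfalso
        have : w = 1 := by omega
        rw [this] at heq
        have hq3 := hQper _ _ 1 hq1
        have := huniq _ _ _ _ n 0 hq1 hq3 (by omega) (by omega) (by omega) (by omega)
          (by push_cast; omega)
        omega
      · have : n * 2 ≤ n * w := Nat.mul_le_mul_left _ h2
        omega
  have hall : ∀ i x, Q i x → ∃ c : ℤ, (L = n ∧ i = n ∧ x - r = l * c) ∨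
    (L = 2 * n ∧ ((i = n - 1 ∧ x - r = l * c) ∨ (i = 1 ∧ x - (r + n - 1) = l * c))) := by
    intro i x hq
    have hq' := hQper i x (-((x - r) / l)) hq
    have e := Int.emod_add_mul_ediv (x - r) l
    have e1 := Int.emod_nonneg (x - r) (b := l) (by omega)
    have e2 := Int.emod_lt_of_pos (x - r) (b := l) (by omega)
    have e3 := hQ _ _ hq
    set c := (x - r) / (l : ℤ)
    have e4 : (l : ℤ) * (-c) = -(l * c) := by ring
    rw [e4] at hq'
    refine ⟨c, ?_⟩
    have := inblock n hn Q huniq r L hB i _ 0 hq' (by omega) (by omega) (by push_cast; omega)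
      (by push_cast; omega)
    omega
  subst hLl
  obtain ⟨k, q, hk⟩ : ∃ (k : ℕ) (q : ℤ), r = k + L * q := by
    refine ⟨(r % L).toNat, r / L, ?_⟩
    have e := Int.emod_add_mul_ediv r L
    have e1 := Int.emod_nonneg r (b := L) (by omega)
    omega
  have hzero : ∀ d, (∀ i x, Q i x → d ≠ dd n i) → U d = 0 := by
    intro d hd
    apply Bt_zero (hU d)
    intro x
    by_contra hc
    obtain ⟨-, i, h1, h2, h3, -⟩ := htile _ _ hc
    exact hd i x ⟨h1, h2, h3 ▸ hc⟩ h3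
  rcases hB with ⟨hL, hq⟩ | ⟨hL, hq1, hq2⟩
  · left
    refine ⟨hL, k, fun d => ?_⟩
    have hdn : dd n n = 2 ^ n - 1 := by
      unfold dd; rw [pow_succ]; omega
    unfold sol1
    rw [← hdn, ← hL]
    split_ifs with hd
    · rw [← pow_zero 2, shift_powk _ _ _ (by omega), hd, zero_add]
      apply Bt_single hl (hU _)
      intro x
      constructor
      · intro hx
        obtain ⟨c, hc⟩ := hall n x ⟨by omega, le_refl n, hL ▸ hx⟩
        refine ⟨c + q, ?_⟩
        rw [mul_add]
        omega
      · rintro ⟨c, hc⟩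
        have := hQper _ _ (c - q) hq
        have e : r + L * (c - q) = x := by rw [hk]; linarith
        rw [e] at this
        exact hL ▸ this.2.2
    · rw [shift_zero _ _ hl]
      apply hzero
      intro i x hqi hdi
      obtain ⟨c, hc⟩ := hall i x hqi
      have : i = n := by omega
      rw [this] at hdi
      exact hd (hL ▸ hdi)
  · right
    refine ⟨hL, k, fun d => ?_⟩
    have hd1 : dd n 1 = 2 ^ (n + 1) - 3 := by unfold dd; omega
    have hdn : dd n (n - 1) = 3 * 2 ^ (n - 1) - 1 := by
      unfold dd
      have : n + 1 = (n - 1) + 2 := by omega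
      rw [this, pow_add]; omega
    unfold sol2
    rw [← hdn, ← hd1, ← hL]
    split_ifs with hd hd'
    · rw [shift_powk _ _ _ (by omega), hd]
      apply Bt_single hl (hU _)
      intro x
      constructor
      · intro hx
        obtain ⟨c, hc⟩ := hall 1 x ⟨by omega, by omega, hx⟩
        refine ⟨c + q, ?_⟩
        rw [mul_add]
        push_cast
        omega
      · rintro ⟨c, hc⟩
        have := hQper _ _ (c - q) hq2
        have e : r + n - 1 + L * (c - q) = x := by
          rw [hk, mul_sub]
          push_cast at hc
          omega
        rw [e] at this
        exact this.2.2
    · rw [← pow_zero 2, shift_powk _ _ _ (by omega), hd', zero_add]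
      apply Bt_single hl (hU _)
      intro x
      constructor
      · intro hx
        obtain ⟨c, hc⟩ := hall (n - 1) x ⟨by omega, by omega, hx⟩
        refine ⟨c + q, ?_⟩
        rw [mul_add]
        omega
      · rintro ⟨c, hc⟩
        have := hQper _ _ (c - q) hq1
        have e : r + L * (c - q) = x := by rw [hk]; linarith
        rw [e] at this
        exact this.2.2
    · rw [shift_zero _ _ hl]
      apply hzero
      intro i x hqi hdi
      obtain ⟨c, hc⟩ := hall i x hqi
      have : i = n - 1 ∨ i = 1 := by omega
      rcases this with h0 | h0
      · rw [h0] at hdi; exact hd' hdi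
      · rw [h0] at hdi; exact hd hdi

lemma s2_pow (k : ℕ) : s2 (2 ^ k) = 1 := by
  induction k with
  | zero => simp [s2]
  | succ k ih =>
    unfold s2 at *
    rw [pow_succ, mul_comm, Nat.digits_def' (by norm_num) (by positivity)]
    simpa using ih

lemma s2_zero : s2 0 = 0 := by simp [s2]

lemma sol1_ok (n : ℕ) (hn : 3 ≤ n) : IsSolution (oddD n) n (sol1 (2 ^ n - 1)) ∧
        IrreducibleSol (oddD n) n (sol1 (2 ^ n - 1)) ∧
        n * weight (oddD n) (sol1 (2 ^ n - 1)) = n := by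
  have hp : 2 ^ 3 ≤ 2 ^ n := Nat.pow_le_pow_right (by norm_num) hn
  have hm : 2 ^ n - 1 ∈ oddD n := by
    rw [mem_oddD, pow_succ]
    have : 2 ^ n = 2 * 2 ^ (n - 1) := by
      rw [← pow_succ']; congr 1; omega
    omega
  have hgen : ∀ F : ℕ → ℕ, F 0 = 0 →
      ∑ d ∈ oddD n, d * F (sol1 (2 ^ n - 1) d) = (2 ^ n - 1) * F 1 := by
    intro F hF
    rw [Finset.sum_eq_single_of_mem _ hm]
    · simp [sol1]
    · intro b _ hb; simp [sol1, hb, hF]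
  refine ⟨⟨by omega, ?_, ?_, ?_, ?_⟩, ?_, ?_⟩
  · intro d; unfold sol1; split_ifs <;> omega
  · intro d hd
    unfold sol1
    rw [if_neg]
    rintro rfl
    exact hd hm
  · rw [hgen (fun x => x) rfl]; simp
  · rw [hgen (fun x => x) rfl]; omega
  · have hphi : ∀ k < n, supportMap (oddD n) n (sol1 (2 ^ n - 1)) k = 2 ^ k := by
      intro k hk
      unfold supportMap
      rw [hgen (fun x => (shift2 n)^[k] x) (shift_zero _ _ (by omega))]
      have : (shift2 n)^[k] 1 = 2 ^ k := by
        have := shift_powk n 0 k (by omega)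
        rwa [pow_zero, zero_add, Nat.mod_eq_of_lt hk] at this
      rw [this]
      exact Nat.mul_div_cancel_left _ (by omega)
    intro a ha b hb hab
    simp only [Finset.coe_range, Set.mem_Iio] at ha hb
    rw [hphi a ha, hphi b hb] at hab
    exact Nat.pow_right_injective (le_refl 2) hab
  · have : weight (oddD n) (sol1 (2 ^ n - 1)) = 1 := by
      unfold weight
      rw [Finset.sum_eq_single_of_mem _ hm]
      · simpa [sol1] using s2_pow 0
      · intro b _ hb; simp [sol1, hb, s2_zero]
    rw [this, mul_one]

lemma sol2_ok (n : ℕ) (hn : 3 ≤ n) :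
    IsSolution (oddD n) (2 * n) (sol2 (2 ^ (n + 1) - 3) (2 ^ (n - 1)) (3 * 2 ^ (n - 1) - 1) 1) ∧
    IrreducibleSol (oddD n) (2 * n)
      (sol2 (2 ^ (n + 1) - 3) (2 ^ (n - 1)) (3 * 2 ^ (n - 1) - 1) 1) ∧
    n * weight (oddD n) (sol2 (2 ^ (n + 1) - 3) (2 ^ (n - 1)) (3 * 2 ^ (n - 1) - 1) 1)
      = 2 * n := by
  obtain ⟨m, rfl⟩ : ∃ m, n = m + 1 := ⟨n - 1, by omega⟩
  simp only [Nat.add_sub_cancel]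
  have hp : 2 ^ 2 ≤ 2 ^ m := Nat.pow_le_pow_right (by norm_num) (by omega)
  have hpe : 2 ^ m = 2 * 2 ^ (m - 1) := by
    rw [← pow_succ']; congr 1; omega
  have e1 : 2 ^ (m + 1 + 1) = 4 * 2 ^ m := by ring
  have e2 : 2 ^ (2 * (m + 1)) = 4 * (2 ^ m * 2 ^ m) := by ring
  have hpp : 4 * 2 ^ m ≤ 2 ^ m * 2 ^ m := Nat.mul_le_mul_right _ hp
  set a := 2 ^ (m + 1 + 1) - 3 with ha
  set b := 3 * 2 ^ m - 1 with hb
  have hma : a ∈ oddD (m + 1) := by rw [mem_oddD]; omega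
  have hmb : b ∈ oddD (m + 1) := by rw [mem_oddD]; omega
  have hab : a ≠ b := by omega
  set V := sol2 a (2 ^ m) b 1 with hV
  have hVa : V a = 2 ^ m := by simp [hV, sol2]
  have hVb : V b = 1 := by simp [hV, sol2, hab.symm]
  have hVo : ∀ d, d ≠ a → d ≠ b → V d = 0 := by
    intro d h1 h2; simp [hV, sol2, h1, h2]
  have hgen : ∀ F : ℕ → ℕ → ℕ, (∀ d, F d 0 = 0) →
      ∑ d ∈ oddD (m + 1), F d (V d) = F a (2 ^ m) + F b 1 := by
    intro F hF
    rw [Finset.sum_eq_add_of_mem a b hma hmb hab, hVa, hVb]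
    intro c _ hc
    rw [hVo c hc.1 hc.2, hF]
  have hM : 0 < 2 ^ (2 * (m + 1)) - 1 := by omega
  have key : a * 2 ^ m + b = 2 ^ (2 * (m + 1)) - 1 := by
    have h1 : a * 2 ^ m = 4 * (2 ^ m * 2 ^ m) - 3 * 2 ^ m := by
      rw [ha, e1, Nat.sub_mul, mul_assoc]
    omega
  have key2 : a + b * 2 ^ (m + 2) = 3 * (2 ^ (2 * (m + 1)) - 1) := by
    have h1 : b * 2 ^ (m + 2) = 12 * (2 ^ m * 2 ^ m) - 4 * 2 ^ m := by
      rw [hb, pow_add, Nat.sub_mul]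
      congr 1 <;> ring
    omega
  refine ⟨⟨by omega, ?_, ?_, ?_, ?_⟩, ?_, ?_⟩
  · intro d
    by_cases h1 : d = a
    · rw [h1, hVa]; omega
    by_cases h2 : d = b
    · rw [h2, hVb]; omega
    rw [hVo d h1 h2]; omega
  · intro d hd
    apply hVo
    · rintro rfl; exact hd hma
    · rintro rfl; exact hd hmb
  · rw [hgen (fun d x => d * x) (by simp), mul_one, key]
  · rw [hgen (fun d x => d * x) (by simp), mul_one, key]; exact hM
  · have hphi : ∀ k < 2 * (m + 1), supportMap (oddD (m + 1)) (2 * (m + 1)) V k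
        = if k ≤ m + 1 then 2 ^ k else 3 * 2 ^ (k - (m + 2)) := by
      intro k hk
      unfold supportMap
      rw [hgen (fun d x => d * (shift2 (2 * (m + 1)))^[k] x)
        (fun d => by rw [shift_zero _ _ (by omega), mul_zero])]
      have s1 : (shift2 (2 * (m + 1)))^[k] 1 = 2 ^ k := by
        have := shift_powk (2 * (m + 1)) 0 k (by omega)
        rwa [pow_zero, zero_add, Nat.mod_eq_of_lt hk] at this
      rw [s1, shift_powk _ _ _ (by omega)]
      split_ifs with hkm
      · rw [Nat.mod_eq_of_lt (by omega)]
        have : a * 2 ^ (m + k) + b * 2 ^ k = (2 ^ (2 * (m + 1)) - 1) * 2 ^ k := by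
          rw [← key]; ring
        rw [this]
        exact Nat.mul_div_cancel_left _ hM
      · have h1 : (m + k) % (2 * (m + 1)) = k - (m + 2) := by
          rw [Nat.mod_eq_sub_mod (by omega), Nat.mod_eq_of_lt (by omega)]; omega
        rw [h1]
        obtain ⟨t, rfl⟩ : ∃ t, k = m + 2 + t := ⟨k - (m + 2), by omega⟩
        rw [Nat.add_sub_cancel_left]
        have : a * 2 ^ t + b * 2 ^ (m + 2 + t)
            = (2 ^ (2 * (m + 1)) - 1) * (3 * 2 ^ t) := by
          have : a * 2 ^ t + b * 2 ^ (m + 2 + t) = (a + b * 2 ^ (m + 2)) * 2 ^ t := by ring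
          rw [this, key2]; ring
        rw [this]
        exact Nat.mul_div_cancel_left _ hM
    have hne : ∀ x y : ℕ, 2 ^ x ≠ 3 * 2 ^ y := by
      intro x y hxy
      have h3 : 3 ∣ 2 ^ x := ⟨_, hxy⟩
      have := Nat.Prime.dvd_of_dvd_pow Nat.prime_three h3
      omega
    intro x hx y hy hxy
    simp only [Finset.coe_range, Set.mem_Iio] at hx hy
    rw [hphi x hx, hphi y hy] at hxy
    split_ifs at hxy with h1 h2 h2
    · exact Nat.pow_right_injective (le_refl 2) hxy
    · exact absurd hxy (hne _ _)
    · exact absurd hxy.symm (hne _ _)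
    · have h4 : 2 ^ (x - (m + 2)) = 2 ^ (y - (m + 2)) := by omega
      have := Nat.pow_right_injective (le_refl 2) h4
      omega
  · have : weight (oddD (m + 1)) V = 2 := by
      unfold weight
      rw [hgen (fun _ x => s2 x) (fun _ => s2_zero), s2_pow]
      have := s2_pow 0
      rw [pow_zero] at this
      rw [this]
    rw [this]; ring

/-- For `n` large enough and `D = {i : 1 ≤ i ≤ 2^{n+1} − 3, i odd}`: every irreducible
solution has density at least `1/n` (`n·s(U) ≥ ℓ`), and the irreducible solutions of
density exactly `1/n` are exactly, up to shift, `1·(2^n − 1)` (length `n`) and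
`2^{n−1}·(2^{n+1} − 3) + 1·(3·2^{n−1} − 1) = 2^{2n} − 1` (length `2n`). -/
theorem minimal_density_solutions :
    ∃ N : ℕ, ∀ n : ℕ, N ≤ n →
      (∀ ℓ U, IsSolution (oddD n) ℓ U → IrreducibleSol (oddD n) ℓ U →
        ℓ ≤ n * weight (oddD n) U) ∧
      (IsSolution (oddD n) n (sol1 (2 ^ n - 1)) ∧
        IrreducibleSol (oddD n) n (sol1 (2 ^ n - 1)) ∧
        n * weight (oddD n) (sol1 (2 ^ n - 1)) = n) ∧
      (IsSolution (oddD n) (2 * n) (sol2 (2 ^ (n + 1) - 3) (2 ^ (n - 1)) (3 * 2 ^ (n - 1) - 1) 1) ∧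
        IrreducibleSol (oddD n) (2 * n) (sol2 (2 ^ (n + 1) - 3) (2 ^ (n - 1)) (3 * 2 ^ (n - 1) - 1) 1) ∧
        n * weight (oddD n) (sol2 (2 ^ (n + 1) - 3) (2 ^ (n - 1)) (3 * 2 ^ (n - 1) - 1) 1) = 2 * n) ∧
      (∀ ℓ U, IsSolution (oddD n) ℓ U → IrreducibleSol (oddD n) ℓ U →
        n * weight (oddD n) U = ℓ →
        (ℓ = n ∧ IsShiftOf n U (sol1 (2 ^ n - 1))) ∨
        (ℓ = 2 * n ∧
          IsShiftOf (2 * n) U (sol2 (2 ^ (n + 1) - 3) (2 ^ (n - 1)) (3 * 2 ^ (n - 1) - 1) 1))) := by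
  exact ⟨3, fun n hn => ⟨fun ℓ U h _ => (sol_main n ℓ (by omega) U h).1, sol1_ok n hn, sol2_ok n hn,
    fun ℓ U h hirr heq => uniqueness n hn ℓ U h hirr heq⟩⟩
end

section
/- There exists N such that for all n ≥ N the following holds for D = {i : 1 ≤ i ≤ 2^{n+1} − 3, i odd}: (a) there is no irreducible solution U of length ℓ for D whose density s(U)/ℓ lies strictly between 1/n and 2/(2n−1); (b) the irreducible solutions of density exactly 2/(2n−1) (necessarily of weight 2 and length 2n−1) are exactly, up to shift, the following four solutions of length 2n−1: u_{2^n−3} = 2^{n−1}, u_{3·2^{n−1}−1} = 1 (all other u_d = 0); and, for each i ∈ {3, 5, 7}, u_{2^{n+1}−i} = 2^{n−2}, u_{i·2^{n−2}−1} = 1 (all other u_d = 0). (In each case ∑ d·u_d = 2^{2n−1} − 1.) -/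
lemma shift2_add {ℓ u : ℕ} (hℓ : 1 ≤ ℓ) (hu : u ≤ 2 ^ ℓ - 1) :
    shift2 ℓ u + (if 2 ^ (ℓ - 1) ≤ u then 2 ^ ℓ - 1 else 0) = 2 * u := by
  obtain ⟨m, rfl⟩ : ∃ m, ℓ = m + 1 := ⟨ℓ - 1, by omega⟩
  have h1 : 0 < 2 ^ m := by positivity
  have e : 2 ^ (m + 1) = 2 * 2 ^ m := by ring
  unfold shift2
  simp only [Nat.add_sub_cancel, e] at *
  split_ifs with h2 h3 h3
  · omega
  · omega
  · rw [Nat.mod_eq_sub_mod (by omega), Nat.mod_eq_of_lt (by omega)]; omega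
  · rw [Nat.mod_eq_of_lt (by omega)]; rfl

lemma shift2_le {ℓ u : ℕ} (hℓ : 1 ≤ ℓ) (hu : u ≤ 2 ^ ℓ - 1) : shift2 ℓ u ≤ 2 ^ ℓ - 1 := by
  have h := shift2_add hℓ hu
  obtain ⟨m, rfl⟩ : ∃ m, ℓ = m + 1 := ⟨ℓ - 1, by omega⟩
  have h1 : 0 < 2 ^ m := by positivity
  have e : 2 ^ (m + 1) = 2 * 2 ^ m := by ring
  simp only [Nat.add_sub_cancel, e] at *
  split_ifs at h <;> omega

lemma shift2_pos {ℓ u : ℕ} (hℓ : 1 ≤ ℓ) (hu : u ≤ 2 ^ ℓ - 1) (h0 : 0 < u) : 0 < shift2 ℓ u := by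
  have h := shift2_add hℓ hu
  obtain ⟨m, rfl⟩ : ∃ m, ℓ = m + 1 := ⟨ℓ - 1, by omega⟩
  have h1 : 0 < 2 ^ m := by positivity
  have e : 2 ^ (m + 1) = 2 * 2 ^ m := by ring
  simp only [Nat.add_sub_cancel, e] at *
  split_ifs at h <;> omega

lemma iter_le {ℓ u : ℕ} (hℓ : 1 ≤ ℓ) (hu : u ≤ 2 ^ ℓ - 1) (k : ℕ) :
    (shift2 ℓ)^[k] u ≤ 2 ^ ℓ - 1 := by
  induction k with
  | zero => simpa using hu
  | succ k ih => rw [Function.iterate_succ_apply']; exact shift2_le hℓ ih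

/-- closed form of the iterated shift -/
lemma iter_formula {ℓ u : ℕ} (hu : u ≤ 2 ^ ℓ - 1) (k : ℕ) (hk : k ≤ ℓ) :
    (shift2 ℓ)^[k] u = (u % 2 ^ (ℓ - k)) * 2 ^ k + u / 2 ^ (ℓ - k) := by
  have hpos : 0 < 2 ^ ℓ := by positivity
  induction k with
  | zero =>
    simp only [Function.iterate_zero, id, Nat.sub_zero, pow_zero, mul_one]
    rw [Nat.mod_eq_of_lt (by omega), Nat.div_eq_of_lt (by omega)]; simp
  | succ k ih =>
    have ih := ih (by omega)
    obtain ⟨j, rfl⟩ : ∃ j, ℓ = j + k + 1 := ⟨ℓ - k - 1, by omega⟩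
    rw [Function.iterate_succ_apply']
    have hle := iter_le (ℓ := j + k + 1) (by omega) hu k
    have h := shift2_add (by omega) hle
    rw [show j + k + 1 - k = j + 1 by omega] at ih
    rw [show j + k + 1 - (k + 1) = j by omega]
    rw [show j + k + 1 - 1 = j + k by omega] at h
    set v := (shift2 (j + k + 1))^[k] u with hv
    have hj : 0 < 2 ^ j := by positivity
    have hk' : 0 < 2 ^ k := by positivity
    obtain ⟨q, b, r, hb, hr, hur⟩ : ∃ q b r, b < 2 ∧ r < 2 ^ j ∧ u = (2 * q + b) * 2 ^ j + r := by
      refine ⟨u / 2 ^ j / 2, u / 2 ^ j % 2, u % 2 ^ j, Nat.mod_lt _ (by norm_num), Nat.mod_lt _ hj, ?_⟩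
      rw [Nat.div_add_mod, Nat.div_add_mod']
    have e1 : u % 2 ^ j = r := by
      rw [hur, Nat.mul_comm, Nat.mul_add_mod, Nat.mod_eq_of_lt hr]
    have e2 : u / 2 ^ j = 2 * q + b := by
      rw [hur, Nat.mul_comm, Nat.mul_add_div hj, Nat.div_eq_of_lt hr]; rfl
    have e3 : u / 2 ^ (j + 1) = q := by
      rw [pow_succ, ← Nat.div_div_eq_div_mul, e2]; omega
    have e4 : u % 2 ^ (j + 1) = b * 2 ^ j + r := by
      have := Nat.div_add_mod u (2 ^ (j + 1))
      rw [e3] at this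
      have h5 : u = 2 ^ (j+1) * q + (b * 2 ^ j + r) := by rw [hur]; ring
      omega
    rw [e3, e4] at ih
    rw [e1, e2]
    have hq : q < 2 ^ k := by
      rw [← e3]; apply Nat.div_lt_of_lt_mul
      rw [← pow_add, show j + 1 + k = j + k + 1 by ring]; omega
    have hrk : (r + 1) * 2 ^ k ≤ 2 ^ j * 2 ^ k := Nat.mul_le_mul_right _ hr
    have e5 : 2 ^ (j + k) = 2 ^ j * 2 ^ k := pow_add _ _ _
    have e6 : 2 ^ (j + k + 1) = 2 * (2 ^ j * 2 ^ k) := by rw [pow_succ, e5]; ring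
    rw [e5, e6] at h
    rw [pow_succ]
    generalize shift2 (j + k + 1) v = s at h ⊢
    have : b = 0 ∨ b = 1 := by omega
    rcases this with rfl | rfl
    · rw [if_neg] at h
      · rw [ih] at h; linarith
      · rw [ih]; push Not; nlinarith
    · rw [if_pos] at h
      · have hp : 1 ≤ 2 * (2 ^ j * 2 ^ k) := by rw [← e6]; exact Nat.one_le_two_pow
        zify [hp] at h ih ⊢; rw [ih] at h; linarith
      · rw [ih]; nlinarith

lemma iter_full {ℓ u : ℕ} (hu : u ≤ 2 ^ ℓ - 1) : (shift2 ℓ)^[ℓ] u = u := by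
  rw [iter_formula hu ℓ le_rfl]; simp [Nat.mod_one]

lemma top_iff {ℓ u k : ℕ} (hu : u ≤ 2 ^ ℓ - 1) (hk : k < ℓ) :
    2 ^ (ℓ - 1) ≤ (shift2 ℓ)^[k] u ↔ u.testBit (ℓ - 1 - k) = true := by
  rw [iter_formula hu k hk.le]
  obtain ⟨j, rfl⟩ : ∃ j, ℓ = j + k + 1 := ⟨ℓ - k - 1, by omega⟩
  rw [show j + k + 1 - k = j + 1 by omega, show j + k + 1 - 1 - k = j by omega,
    show j + k + 1 - 1 = j + k by omega, pow_add]
  have hpos : 0 < 2 ^ (j + k + 1) := by positivity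
  have hj : 0 < 2 ^ j := by positivity
  have hk' : 0 < 2 ^ k := by positivity
  have hq : u / 2 ^ (j + 1) < 2 ^ k := by
    apply Nat.div_lt_of_lt_mul
    rw [← pow_add, show j + 1 + k = j + k + 1 by ring]; omega
  rw [Nat.testBit_eq_decide_div_mod_eq, decide_eq_true_iff]
  have e : u % 2 ^ (j + 1) = u % 2 ^ j + 2 ^ j * (u / 2 ^ j % 2) := by
    rw [pow_succ, Nat.mod_mul]
  have hr : u % 2 ^ j < 2 ^ j := Nat.mod_lt _ hj
  rw [e]
  set r := u % 2 ^ j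
  set q := u / 2 ^ (j + 1)
  have hb : u / 2 ^ j % 2 < 2 := Nat.mod_lt _ (by norm_num)
  set b := u / 2 ^ j % 2
  have : b = 0 ∨ b = 1 := by omega
  have hrk : (r + 1) * 2 ^ k ≤ 2 ^ j * 2 ^ k := Nat.mul_le_mul_right _ hr
  rcases this with h | h <;> rw [h]
  · simp; nlinarith
  · simp; nlinarith

lemma s2_eq (ℓ : ℕ) : ∀ u, u < 2 ^ ℓ → s2 u = ∑ j ∈ Finset.range ℓ, (if u.testBit j then 1 else 0) := by
  induction ℓ with
  | zero => intro u hu; simp at hu; subst hu; simp [s2]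
  | succ ℓ ih =>
    intro u hu
    rw [Finset.sum_range_succ']
    have h2 : u / 2 < 2 ^ ℓ := by rw [pow_succ] at hu; omega
    have h3 := ih _ h2
    simp only [Nat.testBit_succ, ← h3]
    rcases Nat.eq_zero_or_pos u with rfl | h0
    · simp [s2]
    · unfold s2
      rw [Nat.digits_def' (by norm_num) h0, List.sum_cons, Nat.testBit_zero]
      have : u % 2 = 0 ∨ u % 2 = 1 := by omega
      rcases this with h | h <;> simp [h, Nat.add_comm]

/-- the set of elements subtracted at step `k` -/
def topSet (D : Finset ℕ) (ℓ : ℕ) (U : ℕ → ℕ) (k : ℕ) : Finset ℕ :=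
  D.filter (fun d => 2 ^ (ℓ - 1) ≤ (shift2 ℓ)^[k] (U d))

lemma weight_eq {D : Finset ℕ} {ℓ : ℕ} {U : ℕ → ℕ} (hU : ∀ d, U d ≤ 2 ^ ℓ - 1) :
    weight D U = ∑ k ∈ Finset.range ℓ, (topSet D ℓ U k).card := by
  have hpos : 0 < 2 ^ ℓ := by positivity
  unfold weight topSet
  simp only [Finset.card_filter]
  rw [Finset.sum_comm]
  apply Finset.sum_congr rfl
  intro d _
  rw [s2_eq ℓ (U d) (by have := hU d; omega), ← Finset.sum_range_reflect]
  apply Finset.sum_congr rfl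
  intro k hk
  have := top_iff (hU d) (Finset.mem_range.mp hk)
  by_cases h : 2 ^ (ℓ - 1) ≤ (shift2 ℓ)^[k] (U d)
  · rw [if_pos h, if_pos (this.mp h)]
  · rw [if_neg h, if_neg (fun h' => h (this.mpr h'))]

lemma sum_step {D : Finset ℕ} {ℓ : ℕ} {U : ℕ → ℕ} (hℓ : 1 ≤ ℓ) (hU : ∀ d, U d ≤ 2 ^ ℓ - 1) (k : ℕ) :
    (∑ d ∈ D, d * (shift2 ℓ)^[k+1] (U d)) + (2 ^ ℓ - 1) * ∑ d ∈ topSet D ℓ U k, d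
      = 2 * ∑ d ∈ D, d * (shift2 ℓ)^[k] (U d) := by
  unfold topSet
  rw [Finset.sum_filter, Finset.mul_sum, Finset.mul_sum, ← Finset.sum_add_distrib]
  apply Finset.sum_congr rfl
  intro d _
  have h := shift2_add hℓ (iter_le hℓ (hU d) k)
  rw [Function.iterate_succ_apply']
  split_ifs at h ⊢ with h1
  · calc _ = d * (shift2 ℓ ((shift2 ℓ)^[k] (U d)) + (2 ^ ℓ - 1)) := by ring
      _ = _ := by rw [h]; ring
  · calc _ = d * (shift2 ℓ ((shift2 ℓ)^[k] (U d)) + 0) := by ring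
      _ = _ := by rw [h]; ring

lemma sum_dvd {D : Finset ℕ} {ℓ : ℕ} {U : ℕ → ℕ} (h : IsSolution D ℓ U) (k : ℕ) :
    (2 ^ ℓ - 1) ∣ ∑ d ∈ D, d * (shift2 ℓ)^[k] (U d) := by
  induction k with
  | zero => simpa using h.dvd
  | succ k ih =>
    have h1 := sum_step (D := D) h.len_pos h.bounded k
    rw [← Nat.dvd_add_left (Dvd.intro _ rfl : (2 ^ ℓ - 1) ∣ (2 ^ ℓ - 1) * ∑ d ∈ topSet D ℓ U k, d), h1]
    exact Dvd.dvd.mul_left ih 2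

lemma sum_pos' {D : Finset ℕ} {ℓ : ℕ} {U : ℕ → ℕ} (h : IsSolution D ℓ U) (k : ℕ) :
    0 < ∑ d ∈ D, d * (shift2 ℓ)^[k] (U d) := by
  obtain ⟨d, hd, h0⟩ := Finset.exists_ne_zero_of_sum_ne_zero h.pos.ne'
  have h2 : 0 < (shift2 ℓ)^[k] (U d) := by
    induction k with
    | zero => simp; exact Nat.pos_of_ne_zero (right_ne_zero_of_mul h0)
    | succ k ih =>
      rw [Function.iterate_succ_apply']
      exact shift2_pos h.len_pos (iter_le h.len_pos (h.bounded d) k) ih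
  have h3 : 0 < d * (shift2 ℓ)^[k] (U d) :=
    Nat.mul_pos (Nat.pos_of_ne_zero (left_ne_zero_of_mul h0)) h2
  exact lt_of_lt_of_le h3 (Finset.single_le_sum (f := fun d => d * (shift2 ℓ)^[k] (U d))
    (fun _ _ => Nat.zero_le _) hd)

lemma two_pow_sub_pos {ℓ : ℕ} (h : 1 ≤ ℓ) : 0 < 2 ^ ℓ - 1 := by
  have : 2 ^ 1 ≤ 2 ^ ℓ := Nat.pow_le_pow_right (by norm_num) h
  omega

lemma support_mul {D : Finset ℕ} {ℓ : ℕ} {U : ℕ → ℕ} (h : IsSolution D ℓ U) (k : ℕ) :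
    (2 ^ ℓ - 1) * supportMap D ℓ U k = ∑ d ∈ D, d * (shift2 ℓ)^[k] (U d) :=
  Nat.mul_div_cancel' (sum_dvd h k)

lemma support_pos {D : Finset ℕ} {ℓ : ℕ} {U : ℕ → ℕ} (h : IsSolution D ℓ U) (k : ℕ) :
    1 ≤ supportMap D ℓ U k := by
  have h1 := support_mul h k
  have h2 := sum_pos' h k
  rw [← h1] at h2
  exact Nat.pos_of_mul_pos_left h2

lemma support_step {D : Finset ℕ} {ℓ : ℕ} {U : ℕ → ℕ} (h : IsSolution D ℓ U) (k : ℕ) :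
    supportMap D ℓ U (k + 1) + ∑ d ∈ topSet D ℓ U k, d = 2 * supportMap D ℓ U k := by
  have h1 := sum_step (D := D) h.len_pos h.bounded k
  rw [← support_mul h, ← support_mul h] at h1
  apply Nat.eq_of_mul_eq_mul_left (two_pow_sub_pos h.len_pos)
  linarith

lemma support_period {D : Finset ℕ} {ℓ : ℕ} {U : ℕ → ℕ} (h : IsSolution D ℓ U) :
    supportMap D ℓ U ℓ = supportMap D ℓ U 0 := by
  unfold supportMap
  simp only [iter_full (h.bounded _), Function.iterate_zero, id]

/-- shift of a solution -/
def shiftSol (ℓ : ℕ) (U : ℕ → ℕ) (k : ℕ) : ℕ → ℕ := fun d => (shift2 ℓ)^[k] (U d)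

lemma shift2_zero (ℓ : ℕ) : shift2 ℓ 0 = 0 := by
  unfold shift2; split_ifs <;> simp

lemma iter_zero (ℓ k : ℕ) : (shift2 ℓ)^[k] 0 = 0 := Function.iterate_fixed (shift2_zero ℓ) k

lemma shiftSol_sol {D : Finset ℕ} {ℓ : ℕ} {U : ℕ → ℕ} (h : IsSolution D ℓ U) (k : ℕ) :
    IsSolution D ℓ (shiftSol ℓ U k) where
  len_pos := h.len_pos
  bounded d := iter_le h.len_pos (h.bounded d) k
  supp_sub d hd := by simp [shiftSol, h.supp_sub d hd, iter_zero]
  dvd := sum_dvd h k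
  pos := sum_pos' h k

lemma shiftSol_support (D : Finset ℕ) (ℓ : ℕ) (U : ℕ → ℕ) (k j : ℕ) :
    supportMap D ℓ (shiftSol ℓ U k) j = supportMap D ℓ U (j + k) := by
  unfold supportMap shiftSol
  simp only [Function.iterate_add_apply]

lemma shiftSol_topSet (D : Finset ℕ) (ℓ : ℕ) (U : ℕ → ℕ) (k j : ℕ) :
    topSet D ℓ (shiftSol ℓ U k) j = topSet D ℓ U (j + k) := by
  unfold topSet shiftSol
  simp only [Function.iterate_add_apply]

lemma shiftSol_succ (ℓ : ℕ) (U : ℕ → ℕ) (k : ℕ) :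
    shiftSol ℓ U (k + 1) = shiftSol ℓ (shiftSol ℓ U k) 1 := by
  funext d; simp [shiftSol, Function.iterate_succ_apply']

lemma topSet_period {D : Finset ℕ} {ℓ : ℕ} {U : ℕ → ℕ} (h : IsSolution D ℓ U) :
    topSet D ℓ U ℓ = topSet D ℓ U 0 := by
  unfold topSet
  apply Finset.filter_congr
  intro d _
  rw [iter_full (h.bounded d)]
  rfl

lemma shiftSol_weight {D : Finset ℕ} {ℓ : ℕ} {U : ℕ → ℕ} (h : IsSolution D ℓ U) (k : ℕ) :
    weight D (shiftSol ℓ U k) = weight D U := by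
  induction k with
  | zero => rfl
  | succ k ih =>
    rw [shiftSol_succ, ← ih]
    have h' := shiftSol_sol h k
    generalize shiftSol ℓ U k = V at *
    rw [weight_eq (shiftSol_sol h' 1).bounded, weight_eq h'.bounded]
    simp only [shiftSol_topSet]
    have h1 := Finset.sum_range_succ (fun k => (topSet D ℓ V k).card) ℓ
    have h2 := Finset.sum_range_succ' (fun k => (topSet D ℓ V k).card) ℓ
    rw [topSet_period h'] at h1
    linarith

lemma shiftSol_irred {D : Finset ℕ} {ℓ : ℕ} {U : ℕ → ℕ} (h : IsSolution D ℓ U)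
    (hi : IrreducibleSol D ℓ U) (k : ℕ) : IrreducibleSol D ℓ (shiftSol ℓ U k) := by
  induction k with
  | zero => exact hi
  | succ k ih =>
    rw [shiftSol_succ]
    have h' := shiftSol_sol h k
    generalize shiftSol ℓ U k = V at *
    have hp := support_period h'
    have key : ∀ a, a < ℓ → ∃ b, b < ℓ ∧ supportMap D ℓ V (a + 1) = supportMap D ℓ V b ∧
        (b = a + 1 ∨ (b = 0 ∧ a + 1 = ℓ)) := by
      intro a ha
      by_cases h1 : a + 1 = ℓ
      · exact ⟨0, by omega, by rw [h1, hp], Or.inr ⟨rfl, h1⟩⟩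
      · exact ⟨a + 1, by omega, rfl, Or.inl rfl⟩
    intro a ha b hb hab
    simp only [shiftSol_support] at hab
    simp only [Finset.coe_range, Set.mem_Iio] at ha hb
    obtain ⟨a', ha', ea, ca⟩ := key a ha
    obtain ⟨b', hb', eb, cb⟩ := key b hb
    rw [ea, eb] at hab
    have := ih (by simpa using ha') (by simpa using hb') hab
    omega
/-- the potential function -/
def Hp (n x : ℕ) : ℤ :=
  max (padicValNat 2 x : ℤ) ((Nat.log 2 x : ℤ) - n + 1) - (if x = 2 ^ (padicValNat 2 x) then 2 else 0)

lemma log_two_mul {x : ℕ} (hx : 1 ≤ x) : Nat.log 2 (2 * x) = Nat.log 2 x + 1 := by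
  rw [mul_comm, Nat.log_mul_base (by norm_num) (by omega)]

lemma val_two_mul {x : ℕ} (hx : 1 ≤ x) : padicValNat 2 (2 * x) = padicValNat 2 x + 1 := by
  rw [padicValNat.mul (by norm_num) (by omega), padicValNat.self (by norm_num)]; ring

lemma Hp_double {n x : ℕ} (hx : 1 ≤ x) : Hp n (2 * x) = Hp n x + 1 := by
  unfold Hp
  rw [log_two_mul hx, val_two_mul hx]
  have : (2 * x = 2 ^ (padicValNat 2 x + 1)) ↔ x = 2 ^ padicValNat 2 x := by
    rw [pow_succ]; omega
  simp only [this]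
  push_cast
  split_ifs <;> omega

lemma Hp_odd {n x : ℕ} (hx : x % 2 = 1) :
    Hp n x = max 0 ((Nat.log 2 x : ℤ) - n + 1) - (if x = 1 then 2 else 0) := by
  have h : padicValNat 2 x = 0 := padicValNat.eq_zero_of_not_dvd (by omega)
  unfold Hp
  rw [h]; simp

lemma val_le_log {x : ℕ} : padicValNat 2 x ≤ Nat.log 2 x := padicValNat_le_nat_log x

lemma val_mul_odd {a o : ℕ} (ho : o % 2 = 1) : padicValNat 2 (2 ^ a * o) = a := by
  rw [padicValNat.mul (by positivity) (by omega), padicValNat.prime_pow,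
    padicValNat.eq_zero_of_not_dvd (by omega)]; rfl

lemma le_log {x a : ℕ} (h : 2 ^ a ≤ x) : a ≤ Nat.log 2 x :=
  Nat.le_log_of_pow_le (by norm_num) h

lemma log_lt {x a : ℕ} (h0 : 1 ≤ x) (h : x < 2 ^ a) : Nat.log 2 x < a :=
  Nat.log_lt_of_lt_pow (by omega) h

lemma log_half {x y : ℕ} (h0 : 1 ≤ x) (h : y ≤ 2 * x) : Nat.log 2 y ≤ Nat.log 2 x + 1 := by
  rw [← log_two_mul h0]; exact Nat.log_mono_right h

lemma single_step {n x y d : ℕ} (hn : 10 ≤ n) (hx : 1 ≤ x) (hy : y % 2 = 0) (hd : d % 2 = 1)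
    (hdn : d + 3 ≤ 2 ^ (n + 1)) (h : x + d = y) :
    Hp n y ≤ Hp n x + (n - 1) + (if x = 1 then 2 else 0) := by
  rw [Hp_odd (by omega : x % 2 = 1)]
  obtain ⟨a, o, ho, hyo⟩ := Nat.exists_eq_two_pow_mul_odd (n := y) (by omega)
  have ho := Nat.odd_iff.mp ho
  have hv : padicValNat 2 y = a := by rw [hyo]; exact val_mul_odd ho
  have hl : (Nat.log 2 y : ℤ) - n + 1 ≤ max 0 ((Nat.log 2 x : ℤ) - n + 1) + (n - 1) := by
    by_cases hc : 2 ^ (n + 2) ≤ y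
    · have := log_half hx (y := y) (by rw [pow_succ] at hc; omega)
      omega
    · have := log_lt (by omega) (not_le.mp hc)
      omega
  have e1 : 2 ^ (n + 1) = 2 * 2 ^ n := by ring
  have e2 : 2 ^ (n + 2) = 4 * 2 ^ n := by ring
  unfold Hp
  rw [hv]
  by_cases h1 : o = 1
  · rw [h1, mul_one] at hyo
    rw [if_pos hyo]
    by_cases ha : a ≤ n + 1
    · split_ifs <;> omega
    · obtain ⟨b, rfl⟩ : ∃ b, a = b + 1 := ⟨a - 1, by omega⟩
      have h3 : 2 ^ (n + 1) ≤ 2 ^ b := Nat.pow_le_pow_right (by norm_num) (by omega)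
      have := le_log (x := x) (a := b) (by rw [pow_succ] at hyo; omega)
      split_ifs <;> omega
  · have h0 : ¬ (y = 2 ^ a) := by
      intro h5
      rw [h5] at hyo
      exact h1 (Nat.eq_of_mul_eq_mul_left (by positivity : 0 < 2 ^ a) (by linarith))
    rw [if_neg h0]
    by_cases ha : a + 1 ≤ n
    · split_ifs <;> omega
    · have h3 : 2 ^ n ≤ 2 ^ a := Nat.pow_le_pow_right (by norm_num) (by omega)
      have h4 : 2 ^ a * 3 ≤ 2 ^ a * o := Nat.mul_le_mul_left _ (by omega)
      have := le_log (x := x) (a := a) (by omega)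
      split_ifs <;> omega

lemma multi_step {n x y m S : ℕ} (hn : 10 ≤ n) (hx : 1 ≤ x) (hm : 2 ≤ m)
    (hS : S ≤ m * 2 ^ (n + 1)) (h : x + S = y) :
    2 * Hp n y ≤ 2 * Hp n x + ((2 * n - 1) * m : ℤ) - 5 := by
  have hxl : (Nat.log 2 x : ℤ) - n + 1 - 2 ≤ Hp n x := by
    unfold Hp; split_ifs <;> omega
  have hx0 : (-2 : ℤ) ≤ Hp n x := by
    unfold Hp; split_ifs <;> omega
  have hyl : Hp n y ≤ Nat.log 2 y := by
    have := val_le_log (x := y)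
    unfold Hp; split_ifs <;> omega
  have hmn : (2 * (n : ℤ) - 1) * 2 + (2 * (n : ℤ) - 1) * (m - 2) = (2 * n - 1) * m := by ring
  have h19 : 19 * ((m : ℤ) - 2) ≤ (2 * (n : ℤ) - 1) * (m - 2) := by
    apply mul_le_mul_of_nonneg_right <;> omega
  by_cases hc : y ≤ 2 * x
  · have := log_half hx hc
    omega
  · have hm2 : m < 2 ^ (m - 1 + 1) := by
      rw [show m - 1 + 1 = m by omega]; exact Nat.lt_two_pow_self
    have h2 : y < 2 ^ (m + (n + 2)) := by
      rw [pow_add]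
      have : m * 2 ^ (n + 2) < 2 ^ m * 2 ^ (n + 2) :=
        Nat.mul_lt_mul_of_pos_right Nat.lt_two_pow_self (by positivity)
      rw [pow_succ 2 (n + 1)] at *
      nlinarith
    have := log_lt (by omega) h2
    omega

lemma oddD_mem {n d : ℕ} (hn : 10 ≤ n) : d ∈ oddD n ↔ d % 2 = 1 ∧ d + 3 ≤ 2 ^ (n + 1) := by
  have : 2 ^ 3 ≤ 2 ^ (n + 1) := Nat.pow_le_pow_right (by norm_num) (by omega)
  simp [oddD, oddUpTo]; omega

lemma step_bound {n x x' : ℕ} {A : Finset ℕ} (hn : 10 ≤ n) (hA : A ⊆ oddD n) (hx : 1 ≤ x)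
    (hx' : 1 ≤ x') (h : x' + ∑ d ∈ A, d = 2 * x) :
    (2 : ℤ) - (2 * n - 1) * A.card ≤ 2 * Hp n x' - 2 * Hp n x -
      (if A.card ≤ 1 then (A.card : ℤ) else 5) + (if x' = 1 then 4 else 0) := by
  have hd := Hp_double (n := n) hx
  rcases Nat.lt_or_ge A.card 2 with h2 | h2
  · rw [if_pos (by omega)]
    have : A.card = 0 ∨ A.card = 1 := by omega
    rcases this with h0 | h0
    · rw [Finset.card_eq_zero] at h0
      subst h0
      simp at h
      subst h
      simp only [Finset.card_empty]
      split_ifs <;> push_cast <;> omega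
    · obtain ⟨d, rfl⟩ := Finset.card_eq_one.mp h0
      rw [Finset.sum_singleton] at h
      have hdD := (oddD_mem hn).mp (hA (Finset.mem_singleton_self d))
      have := single_step hn hx' (by omega) hdD.1 hdD.2 h
      rw [h0]
      split_ifs at this ⊢ <;> push_cast <;> omega
  · rw [if_neg (by omega)]
    have hS : ∑ d ∈ A, d ≤ A.card * 2 ^ (n + 1) := by
      rw [← smul_eq_mul]
      apply Finset.sum_le_card_nsmul
      intro d hd
      have := (oddD_mem hn).mp (hA hd); omega
    have := multi_step hn hx' h2 hS h
    split_ifs <;> linarith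

lemma cycle_bound {n ℓ : ℕ} {A : ℕ → Finset ℕ} {x : ℕ → ℕ} (hn : 10 ≤ n)
    (hA : ∀ k, A k ⊆ oddD n) (hx : ∀ k, 1 ≤ x k)
    (h : ∀ k, x (k + 1) + ∑ d ∈ A k, d = 2 * x k) (hp : x ℓ = x 0) :
    2 * (ℓ : ℤ) - (2 * n - 1) * (∑ k ∈ Finset.range ℓ, (A k).card : ℕ) ≤
      -(∑ k ∈ Finset.range ℓ, (if (A k).card ≤ 1 then ((A k).card : ℤ) else 5)) +
      ∑ k ∈ Finset.range ℓ, (if x (k + 1) = 1 then (4 : ℤ) else 0) := by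
  have h1 := Finset.sum_le_sum (s := Finset.range ℓ)
    (fun k _ => step_bound hn (hA k) (hx k) (hx (k + 1)) (h k))
  have h2 := Finset.sum_range_sub (fun k => Hp n (x k)) ℓ
  simp only [hp, sub_self, Finset.sum_sub_distrib, Finset.sum_add_distrib, Finset.sum_const,
    Finset.card_range, ← Finset.mul_sum, nsmul_eq_mul] at h1 h2
  push_cast
  linarith
lemma cycle_core {n ℓ : ℕ} {A : ℕ → Finset ℕ} {x : ℕ → ℕ} (hn : 10 ≤ n)
    (hA : ∀ k, A k ⊆ oddD n) (hx : ∀ k, 1 ≤ x k)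
    (h : ∀ k, x (k + 1) + ∑ d ∈ A k, d = 2 * x k) (hp : x ℓ = x 0)
    (hinj : Set.InjOn x ↑(Finset.range ℓ)) (w : ℕ)
    (hw : w = ∑ k ∈ Finset.range ℓ, (A k).card) (hw0 : 0 < w)
    (hd : (2 * (n : ℤ) - 1) * w ≤ 2 * ℓ) :
    (∀ k < ℓ, (A k).card ≤ 1) ∧ 2 * (ℓ : ℤ) ≤ (2 * n - 2) * w + 4 ∧ ∃ k < ℓ, x k = 1 := by
  have hb := cycle_bound hn hA hx h hp
  rw [← hw] at hb
  have hre : ∑ k ∈ Finset.range ℓ, (if x (k + 1) = 1 then (4 : ℤ) else 0) =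
      ∑ k ∈ Finset.range ℓ, (if x k = 1 then (4 : ℤ) else 0) := by
    have h1 := Finset.sum_range_succ (fun k => if x k = 1 then (4 : ℤ) else 0) ℓ
    have h2 := Finset.sum_range_succ' (fun k => if x k = 1 then (4 : ℤ) else 0) ℓ
    rw [hp] at h1
    linarith
  rw [hre, ← Finset.sum_filter, Finset.sum_const] at hb
  have hcard : ((Finset.range ℓ).filter (fun k => x k = 1)).card ≤ 1 := by
    rw [Finset.card_le_one]
    intro a ha b hb
    rw [Finset.mem_filter] at ha hb
    exact hinj (by exact_mod_cast ha.1) (by exact_mod_cast hb.1) (by rw [ha.2, hb.2])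
  have hnn : ∀ k ∈ Finset.range ℓ, (0 : ℤ) ≤ (if (A k).card ≤ 1 then ((A k).card : ℤ) else 5) := by
    intro k _; split_ifs <;> omega
  have hc1 : ∀ k < ℓ, (A k).card ≤ 1 := by
    intro k hk
    by_contra hcon
    have := Finset.single_le_sum hnn (Finset.mem_range.mpr hk)
    rw [if_neg hcon] at this
    simp only [nsmul_eq_mul] at hb
    have : (((Finset.range ℓ).filter (fun k => x k = 1)).card : ℤ) ≤ 1 := by exact_mod_cast hcard
    linarith
  have hs : ∑ k ∈ Finset.range ℓ, (if (A k).card ≤ 1 then ((A k).card : ℤ) else 5) = w := by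
    rw [hw]; push_cast
    apply Finset.sum_congr rfl
    intro k hk
    rw [if_pos (hc1 k (Finset.mem_range.mp hk))]
  rw [hs] at hb
  simp only [nsmul_eq_mul] at hb
  have hcz : (((Finset.range ℓ).filter (fun k => x k = 1)).card : ℤ) ≤ 1 := by exact_mod_cast hcard
  refine ⟨hc1, by linarith, ?_⟩
  by_contra hcon
  push Not at hcon
  have : (Finset.range ℓ).filter (fun k => x k = 1) = ∅ := by
    apply Finset.filter_eq_empty_iff.mpr
    intro k hk
    exact hcon k (Finset.mem_range.mp hk)
  rw [this] at hb
  simp at hb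
  have : (0 : ℤ) < w := by exact_mod_cast hw0
  linarith

lemma walk_next {n ℓ : ℕ} {A : ℕ → Finset ℕ} {x : ℕ → ℕ}
    (hA : ∀ k, A k ⊆ oddD n)
    (h : ∀ k, x (k + 1) + ∑ d ∈ A k, d = 2 * x k)
    (hc : ∀ k < ℓ, (A k).card ≤ 1) (r t : ℕ) : ∀ k, k + t = ℓ →
    ∑ j ∈ Finset.Ico k ℓ, (A j).card = r + 1 →
    ∃ a d, 1 ≤ a ∧ k + a ≤ ℓ ∧ d ∈ oddD n ∧ A (k + a - 1) = {d} ∧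
      (∀ j, k ≤ j → j < k + a - 1 → A j = ∅) ∧ x (k + a) + d = 2 ^ a * x k ∧
      ∑ j ∈ Finset.Ico (k + a) ℓ, (A j).card = r := by
  induction t with
  | zero => intro k hk hs; simp at hk; subst hk; simp at hs
  | succ t ih =>
    intro k hk hs
    rw [Finset.sum_eq_sum_Ico_succ_bot (by omega)] at hs
    have hck := hc k (by omega)
    have h2 : (A k).card = 0 ∨ (A k).card = 1 := by omega
    have hk1 := h k
    rcases h2 with h2 | h2
    · rw [h2, zero_add] at hs
      rw [Finset.card_eq_zero] at h2
      obtain ⟨a, d, ha, hal, hdD, hAd, he, hxa, hsum⟩ := ih (k + 1) (by omega) hs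
      refine ⟨a + 1, d, by omega, by omega, hdD, ?_, ?_, ?_, ?_⟩
      · rw [← hAd]; congr 1; omega
      · intro j hj1 hj2
        rcases Nat.eq_or_lt_of_le hj1 with rfl | hlt
        · exact h2
        · exact he j (by omega) (by omega)
      · rw [h2, Finset.sum_empty, add_zero] at hk1
        rw [show k + (a + 1) = k + 1 + a by ring, hxa, hk1]; ring
      · rw [show k + (a + 1) = k + 1 + a by ring, hsum]
    · obtain ⟨d, hd⟩ := Finset.card_eq_one.mp h2
      refine ⟨1, d, le_rfl, by omega, hA k (by simp [hd]), by simpa using hd, ?_, ?_, by omega⟩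
      · intro j hj1 hj2; omega
      · rw [hd, Finset.sum_singleton] at hk1; rw [hk1]; ring

lemma walk_last {ℓ : ℕ} {A : ℕ → Finset ℕ} {x : ℕ → ℕ}
    (h : ∀ k, x (k + 1) + ∑ d ∈ A k, d = 2 * x k) (hl : x ℓ = 1) (k : ℕ) (hk : k ≤ ℓ)
    (hs : ∑ j ∈ Finset.Ico k ℓ, (A j).card = 0) : k = ℓ := by
  by_contra hne
  have h1 := (Finset.sum_eq_zero_iff.mp hs) (ℓ - 1) (by simp; omega)
  rw [Finset.card_eq_zero] at h1
  have h2 := h (ℓ - 1)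
  rw [h1, Finset.sum_empty, show ℓ - 1 + 1 = ℓ by omega, hl] at h2
  omega

lemma pow_bound {a b : ℕ} (h : b ≤ a) (x c : ℕ) (hc : c ≤ x) : 2 ^ b * c ≤ 2 ^ a * x :=
  Nat.mul_le_mul (Nat.pow_le_pow_right (by norm_num) h) hc

lemma arith2 {n a e i d1 d2 : ℕ} (hn : 10 ≤ n) (hae : a + e = 2 * n - 1)
    (hi : i % 2 = 1) (hi1 : i ≠ 1) (h1 : i + d1 = 2 ^ a) (h2 : 1 + d2 = 2 ^ e * i)
    (hd1 : d1 + 3 ≤ 2 ^ (n + 1)) (hd2 : d2 + 3 ≤ 2 ^ (n + 1)) :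
    (e = n - 1 ∧ i = 3) ∨ (e = n - 2 ∧ (i = 3 ∨ i = 5 ∨ i = 7)) := by
  obtain ⟨m, rfl⟩ : ∃ m, n = m + 2 := ⟨n - 2, by omega⟩
  have p1 : 2 ^ (m + 2 + 1) = 8 * 2 ^ m := by ring
  have p2 : 2 ^ (m + 2) = 4 * 2 ^ m := by ring
  have p3 : 2 ^ (m + 1) = 2 * 2 ^ m := by ring
  have p4 : 2 ^ (m + 4) = 16 * 2 ^ m := by ring
  have hm : 0 < 2 ^ m := by positivity
  rcases Nat.lt_or_ge m e with h | h
  · rcases Nat.lt_or_ge (m + 1) e with h' | h'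
    · have := pow_bound (show m + 2 ≤ e by omega) i 3 (by omega)
      omega
    · obtain rfl : e = m + 1 := by omega
      left
      refine ⟨by omega, ?_⟩
      by_contra h3
      have := pow_bound (le_refl (m + 1)) i 4 (by omega)
      omega
  · rcases Nat.lt_or_ge e m with h' | h'
    · have := pow_bound (show m + 4 ≤ a by omega) 1 1 le_rfl
      have := pow_bound (Nat.zero_le e) i i le_rfl
      omega
    · obtain rfl : e = m := by omega
      right
      refine ⟨by omega, ?_⟩
      by_contra h3
      have := pow_bound (le_refl e) i 8 (by omega)
      omega

lemma arith3 {n a1 a2 a3 x1 x2 d1 d2 d3 : ℕ} (hn : 10 ≤ n) (hs : a1 + a2 + a3 = 3 * n - 1)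
    (hx1 : x1 % 2 = 1) (hx1' : x1 ≠ 1) (hx2 : x2 % 2 = 1) (hx2' : x2 ≠ 1) (hne : x1 ≠ x2)
    (ha2 : 1 ≤ a2) (ha3 : 1 ≤ a3)
    (h1 : x1 + d1 = 2 ^ a1) (h2 : x2 + d2 = 2 ^ a2 * x1) (h3 : 1 + d3 = 2 ^ a3 * x2)
    (hd1 : d1 + 3 ≤ 2 ^ (n + 1)) (hd2 : d2 + 3 ≤ 2 ^ (n + 1)) (hd3 : d3 + 3 ≤ 2 ^ (n + 1)) :
    False := by
  obtain ⟨m, rfl⟩ : ∃ m, n = m + 2 := ⟨n - 2, by omega⟩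
  have p1 : 2 ^ (m + 2 + 1) = 8 * 2 ^ m := by ring
  have p2 : 2 ^ (m + 2) = 4 * 2 ^ m := by ring
  have p3 : 2 ^ (m + 1) = 2 * 2 ^ m := by ring
  have p4 : 2 ^ (m + 4) = 16 * 2 ^ m := by ring
  have hm : 2 ^ 8 ≤ 2 ^ m := Nat.pow_le_pow_right (by norm_num) (by omega)
  have b3 : a3 ≤ m + 1 := by
    by_contra hc
    have := pow_bound (show m + 2 ≤ a3 by omega) x2 3 (by omega)
    omega
  have hx2b := pow_bound ha3 x2 x2 le_rfl
  have b2 : a2 ≤ m + 1 := by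
    by_contra hc
    have := pow_bound (show m + 2 ≤ a2 by omega) x1 3 (by omega)
    omega
  have hx1b := pow_bound ha2 x1 x1 le_rfl
  have b1 : a1 ≤ m + 3 := by
    by_contra hc
    have := pow_bound (show m + 4 ≤ a1 by omega) 1 1 (by omega)
    omega
  obtain rfl : a3 = m + 1 := by omega
  obtain rfl : a2 = m + 1 := by omega
  have c2 : x2 < 4 := by
    by_contra hc
    have := pow_bound (le_refl (m + 1)) x2 4 (by omega)
    omega
  have c1 : x1 < 5 := by
    by_contra hc
    have := pow_bound (le_refl (m + 1)) x1 5 (by omega)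
    omega
  omega

lemma arith4 {n a1 a2 a3 a4 x1 x2 x3 d1 d2 d3 d4 : ℕ} (hn : 10 ≤ n)
    (hs : a1 + a2 + a3 + a4 = 4 * n - 2)
    (hx1 : x1 % 2 = 1) (hx1' : x1 ≠ 1) (hx2 : x2 % 2 = 1) (hx2' : x2 ≠ 1)
    (hx3 : x3 % 2 = 1) (hx3' : x3 ≠ 1) (hne : x2 ≠ x3)
    (ha2 : 1 ≤ a2) (ha3 : 1 ≤ a3) (ha4 : 1 ≤ a4)
    (h1 : x1 + d1 = 2 ^ a1) (h2 : x2 + d2 = 2 ^ a2 * x1) (h3 : x3 + d3 = 2 ^ a3 * x2)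
    (h4 : 1 + d4 = 2 ^ a4 * x3)
    (hd1 : d1 + 3 ≤ 2 ^ (n + 1)) (hd2 : d2 + 3 ≤ 2 ^ (n + 1)) (hd3 : d3 + 3 ≤ 2 ^ (n + 1))
    (hd4 : d4 + 3 ≤ 2 ^ (n + 1)) :
    False := by
  obtain ⟨m, rfl⟩ : ∃ m, n = m + 2 := ⟨n - 2, by omega⟩
  have p1 : 2 ^ (m + 2 + 1) = 8 * 2 ^ m := by ring
  have p1' : 2 ^ (m + 3) = 8 * 2 ^ m := by ring
  have p2 : 2 ^ (m + 2) = 4 * 2 ^ m := by ring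
  have p3 : 2 ^ (m + 1) = 2 * 2 ^ m := by ring
  have p4 : 2 ^ (m + 4) = 16 * 2 ^ m := by ring
  have hm : 2 ^ 8 ≤ 2 ^ m := Nat.pow_le_pow_right (by norm_num) (by omega)
  have b4 : a4 ≤ m + 1 := by
    by_contra hc
    have := pow_bound (show m + 2 ≤ a4 by omega) x3 3 (by omega)
    omega
  have hx3b := pow_bound ha4 x3 x3 le_rfl
  have b3 : a3 ≤ m + 1 := by
    by_contra hc
    have := pow_bound (show m + 2 ≤ a3 by omega) x2 3 (by omega)
    omega
  have hx2b := pow_bound ha3 x2 x2 le_rfl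
  have b2 : a2 ≤ m + 2 := by
    by_contra hc
    have := pow_bound (show m + 3 ≤ a2 by omega) x1 3 (by omega)
    omega
  have hx1b := pow_bound ha2 x1 x1 le_rfl
  have b1 : a1 ≤ m + 3 := by
    by_contra hc
    have := pow_bound (show m + 4 ≤ a1 by omega) 1 1 (by omega)
    omega
  have c3 : x3 < 8 := by
    by_contra hc
    have := pow_bound (show m ≤ a4 by omega) x3 8 (by omega)
    omega
  have c2 : x2 < 9 := by
    by_contra hc
    have := pow_bound (show m ≤ a3 by omega) x2 9 (by omega)
    omega
  have b2' : a2 ≤ m + 1 := by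
    by_contra hc
    have := pow_bound (show m + 2 ≤ a2 by omega) x1 3 (by omega)
    omega
  have c3 : x3 < 4 := by
    by_contra hc
    have := pow_bound (show m + 1 ≤ a4 by omega) x3 4 (by omega)
    omega
  have c2 : x2 < 5 := by
    by_contra hc
    have := pow_bound (show m + 1 ≤ a3 by omega) x2 5 (by omega)
    omega
  omega

/-- Classification of cycles through `1`. -/
lemma cycle_class {n ℓ : ℕ} {A : ℕ → Finset ℕ} {x : ℕ → ℕ} (hn : 10 ≤ n)
    (hA : ∀ k, A k ⊆ oddD n)
    (h : ∀ k, x (k + 1) + ∑ d ∈ A k, d = 2 * x k) (hp : x ℓ = x 0)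
    (hinj : Set.InjOn x ↑(Finset.range ℓ)) (w : ℕ)
    (hw : w = ∑ k ∈ Finset.range ℓ, (A k).card)
    (hd1 : (2 * (n : ℤ) - 1) * w ≤ 2 * ℓ) (hd2 : ℓ < n * w)
    (hc : ∀ k < ℓ, (A k).card ≤ 1) (hb : 2 * (ℓ : ℤ) ≤ (2 * n - 2) * w + 4) (hx0 : x 0 = 1) :
    ℓ = 2 * n - 1 ∧ w = 2 ∧ ∃ e i, 1 ≤ e ∧ e < ℓ ∧
      ((e = n - 1 ∧ i = 3) ∨ (e = n - 2 ∧ (i = 3 ∨ i = 5 ∨ i = 7))) ∧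
      A (ℓ - e - 1) = {2 ^ (ℓ - e) - i} ∧ A (ℓ - 1) = {2 ^ e * i - 1} ∧
      ∀ j < ℓ, j ≠ ℓ - e - 1 → j ≠ ℓ - 1 → A j = ∅ := by
  rw [hx0] at hp
  have hinj' : ∀ a b, a < ℓ → b < ℓ → x a = x b → a = b := by
    intro a b ha hb hab
    exact hinj (by simpa using ha) (by simpa using hb) hab
  have hw4 : w ≤ 4 := by
    have : (w : ℤ) ≤ 4 := by linarith
    exact_mod_cast this
  have hdz : (ℓ : ℤ) < n * w := by exact_mod_cast hd2
  rw [Finset.range_eq_Ico] at hw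
  have hw2 : 2 ≤ w := by
    by_contra hcon
    have : w = 0 ∨ w = 1 := by omega
    rcases this with rfl | rfl <;> push_cast at * <;> omega
  obtain ⟨r, rfl⟩ : ∃ r, w = r + 2 := ⟨w - 2, by omega⟩
  have hev : ∀ a, 1 ≤ a → ∃ c, 2 ^ a = 2 * c := fun a ha =>
    ⟨2 ^ (a - 1), by rw [← pow_succ']; congr 1; omega⟩
  have hodd : ∀ {X d a y : ℕ}, d ∈ oddD n → 1 ≤ a → X + d = 2 ^ a * y → X % 2 = 1 := by
    intro X d a y hdD ha he
    obtain ⟨c, hc⟩ := hev a ha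
    have := ((oddD_mem hn).mp hdD).1
    rw [hc, mul_assoc] at he
    omega
  obtain ⟨a1, d1, ha1, hl1, hD1, hA1, he1, hxa1, hs1⟩ :=
    walk_next hA h hc (r + 1) ℓ 0 (by omega) (by omega)
  obtain ⟨a2, d2, ha2, hl2, hD2, hA2, he2, hxa2, hs2⟩ :=
    walk_next hA h hc r (ℓ - (0 + a1)) (0 + a1) (by omega) (by omega)
  simp only [zero_add] at *
  have hm1 := (oddD_mem hn).mp hD1
  have hm2 := (oddD_mem hn).mp hD2
  have o1 := hodd hD1 ha1 hxa1
  have o2 := hodd hD2 ha2 hxa2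
  have n1 : x a1 ≠ 1 := fun hh => by
    have := hinj' a1 0 (by omega) (by omega) (by rw [hh, hx0]); omega
  rw [hx0, mul_one] at hxa1
  have hr : r = 0 ∨ r = 1 ∨ r = 2 := by omega
  rcases hr with rfl | rfl | rfl
  · have hlast := walk_last h hp _ hl2 hs2
    have hℓ : ℓ = 2 * n - 1 := by push_cast at *; omega
    rw [hlast, hp] at hxa2
    have key := arith2 hn (by omega) o1 n1 hxa1 hxa2 hm1.2 hm2.2
    refine ⟨hℓ, rfl, a2, x a1, ha2, by omega, key, ?_, ?_, ?_⟩
    · rw [show ℓ - a2 = a1 by omega, hA1]; congr 1; omega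
    · rw [← hlast, hA2]; congr 1; omega
    · intro j hj hj1 hj2
      rcases Nat.lt_or_ge j a1 with hlt | hge
      · exact he1 j (by omega) (by omega)
      · exact he2 j hge (by omega)
  · exfalso
    obtain ⟨a3, d3, ha3, hl3, hD3, hA3, he3, hxa3, hs3⟩ :=
      walk_next hA h hc 0 (ℓ - (a1 + a2)) (a1 + a2) (by omega) (by omega)
    have hm3 := (oddD_mem hn).mp hD3
    have hlast := walk_last h hp _ hl3 hs3
    have n2 : x (a1 + a2) ≠ 1 := fun hh => by
      have := hinj' (a1 + a2) 0 (by omega) (by omega) (by rw [hh, hx0]); omega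
    have hne : x a1 ≠ x (a1 + a2) := fun hh => by
      have := hinj' _ _ (by omega) (by omega) hh; omega
    have hℓ : ℓ = 3 * n - 1 := by push_cast at *; omega
    rw [hlast, hp] at hxa3
    exact arith3 hn (by omega) o1 n1 o2 n2 hne ha2 ha3 hxa1 hxa2 hxa3 hm1.2 hm2.2 hm3.2
  · exfalso
    obtain ⟨a3, d3, ha3, hl3, hD3, hA3, he3, hxa3, hs3⟩ :=
      walk_next hA h hc 1 (ℓ - (a1 + a2)) (a1 + a2) (by omega) (by omega)
    obtain ⟨a4, d4, ha4, hl4, hD4, hA4, he4, hxa4, hs4⟩ :=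
      walk_next hA h hc 0 (ℓ - (a1 + a2 + a3)) (a1 + a2 + a3) (by omega) (by omega)
    have hm3 := (oddD_mem hn).mp hD3
    have hm4 := (oddD_mem hn).mp hD4
    have o3 := hodd hD3 ha3 hxa3
    have hlast := walk_last h hp _ hl4 hs4
    have n2 : x (a1 + a2) ≠ 1 := fun hh => by
      have := hinj' (a1 + a2) 0 (by omega) (by omega) (by rw [hh, hx0]); omega
    have n3 : x (a1 + a2 + a3) ≠ 1 := fun hh => by
      have := hinj' (a1 + a2 + a3) 0 (by omega) (by omega) (by rw [hh, hx0]); omega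
    have hne : x (a1 + a2) ≠ x (a1 + a2 + a3) := fun hh => by
      have := hinj' _ _ (by omega) (by omega) hh; omega
    have hℓ : ℓ = 4 * n - 2 := by push_cast at *; omega
    rw [hlast, hp] at hxa4
    exact arith4 hn (by omega) o1 n1 o2 n2 o3 n3 hne ha2 ha3 ha4 hxa1 hxa2 hxa3 hxa4
      hm1.2 hm2.2 hm3.2 hm4.2
lemma sum_sol2 {D : Finset ℕ} {a b u v : ℕ} (ha : a ∈ D) (hb : b ∈ D) (hab : a ≠ b)
    (g : ℕ → ℕ → ℕ) (hg : ∀ d, g d 0 = 0) :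
    ∑ d ∈ D, g d (sol2 a u b v d) = g a u + g b v := by
  have hsub : ({a, b} : Finset ℕ) ⊆ D := by
    intro d hd
    simp only [Finset.mem_insert, Finset.mem_singleton] at hd
    rcases hd with rfl | rfl <;> assumption
  rw [← Finset.sum_subset hsub, Finset.sum_pair hab]
  · simp [sol2, hab.symm]
  · intro d _ hd
    simp only [Finset.mem_insert, Finset.mem_singleton, not_or] at hd
    simp [sol2, hd.1, hd.2, hg]

lemma s2_two_pow (e : ℕ) : s2 (2 ^ e) = 1 := by
  unfold s2
  have := Nat.digits_base_pow_mul (b := 2) (k := e) (m := 1) (by norm_num) (by norm_num)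
  rw [mul_one] at this
  rw [this]; simp

lemma iter_one {ℓ k : ℕ} (hk : k < ℓ) : (shift2 ℓ)^[k] 1 = 2 ^ k := by
  have h1 := two_pow_sub_pos (ℓ := ℓ) (by omega)
  have h2 : 2 ^ 1 ≤ 2 ^ (ℓ - k) := Nat.pow_le_pow_right (by norm_num) (by omega)
  rw [iter_formula (by omega) k hk.le, Nat.mod_eq_of_lt (by omega), Nat.div_eq_of_lt (by omega)]
  ring

lemma iter_pow_lt {a e k : ℕ} (hk : k < a) : (shift2 (a + e))^[k] (2 ^ e) = 2 ^ (e + k) := by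
  have h1 : 2 ^ e < 2 ^ (a + e) := Nat.pow_lt_pow_right (by norm_num) (by omega)
  have h2 : 2 ^ e < 2 ^ (a + e - k) := Nat.pow_lt_pow_right (by norm_num) (by omega)
  rw [iter_formula (by omega) k (by omega), Nat.mod_eq_of_lt h2, Nat.div_eq_of_lt h2, pow_add]
  ring

lemma iter_pow_ge {a e t : ℕ} (ha : 1 ≤ a) (ht : t < e) :
    (shift2 (a + e))^[a + t] (2 ^ e) = 2 ^ t := by
  have h1 : 2 ^ e < 2 ^ (a + e) := Nat.pow_lt_pow_right (by norm_num) (by omega)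
  rw [iter_formula (by omega) (a + t) (by omega)]
  obtain ⟨s, rfl⟩ : ∃ s, e = s + t := ⟨e - t, by omega⟩
  rw [show a + (s + t) - (a + t) = s by omega, pow_add]
  rw [Nat.mul_mod_right, Nat.mul_div_cancel_left _ (by positivity)]
  ring

lemma good_sol {n a e i : ℕ} (ha : 1 ≤ a) (he : 1 ≤ e) (hi : i % 2 = 1) (hi3 : 3 ≤ i)
    (hia : i ≤ 2 ^ a) (h1 : 2 ^ a - i ∈ oddD n) (h2 : i * 2 ^ e - 1 ∈ oddD n)
    (hne : 2 ^ a - i ≠ i * 2 ^ e - 1) :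
    IsSolution (oddD n) (a + e) (sol2 (2 ^ a - i) (2 ^ e) (i * 2 ^ e - 1) 1) ∧
    IrreducibleSol (oddD n) (a + e) (sol2 (2 ^ a - i) (2 ^ e) (i * 2 ^ e - 1) 1) ∧
    weight (oddD n) (sol2 (2 ^ a - i) (2 ^ e) (i * 2 ^ e - 1) 1) = 2 := by
  have hM := two_pow_sub_pos (ℓ := a + e) (by omega)
  have hie : 1 ≤ i * 2 ^ e := Nat.mul_pos (by omega) (by positivity)
  have hMe : 1 ≤ 2 ^ (a + e) := Nat.one_le_two_pow
  have hsum : ∀ k, ∑ d ∈ oddD n,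
      d * (shift2 (a + e))^[k] (sol2 (2 ^ a - i) (2 ^ e) (i * 2 ^ e - 1) 1 d) =
      (2 ^ a - i) * (shift2 (a + e))^[k] (2 ^ e) + (i * 2 ^ e - 1) * (shift2 (a + e))^[k] 1 := by
    intro k
    exact sum_sol2 h1 h2 hne (fun d u => d * (shift2 (a + e))^[k] u) (fun d => by simp [iter_zero])
  have hlo : ∀ k < a, ∑ d ∈ oddD n,
      d * (shift2 (a + e))^[k] (sol2 (2 ^ a - i) (2 ^ e) (i * 2 ^ e - 1) 1 d) =
      (2 ^ (a + e) - 1) * 2 ^ k := by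
    intro k hk
    rw [hsum, iter_pow_lt hk, iter_one (by omega)]
    zify [hia, hie, hMe]
    rw [pow_add, pow_add]; ring
  have hhi : ∀ t < e, ∑ d ∈ oddD n,
      d * (shift2 (a + e))^[a + t] (sol2 (2 ^ a - i) (2 ^ e) (i * 2 ^ e - 1) 1 d) =
      (2 ^ (a + e) - 1) * (i * 2 ^ t) := by
    intro t ht
    rw [hsum, iter_pow_ge ha ht, iter_one (by omega)]
    zify [hia, hie, hMe]
    rw [pow_add, pow_add]; ring
  have h0 := hlo 0 (by omega)
  simp only [Function.iterate_zero, id, pow_zero, mul_one] at h0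
  refine ⟨⟨by omega, ?_, ?_, ?_, ?_⟩, ?_, ?_⟩
  · intro d
    have h3 : 2 ^ e < 2 ^ (a + e) := Nat.pow_lt_pow_right (by norm_num) (by omega)
    unfold sol2
    split_ifs <;> omega
  · intro d hd
    unfold sol2
    rw [if_neg, if_neg]
    · rintro rfl; exact hd h2
    · rintro rfl; exact hd h1
  · rw [h0]
  · rw [h0]; exact hM
  · have slo : ∀ k < a, supportMap (oddD n) (a + e)
        (sol2 (2 ^ a - i) (2 ^ e) (i * 2 ^ e - 1) 1) k = 2 ^ k := by
      intro k hk
      unfold supportMap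
      rw [hlo k hk, Nat.mul_div_cancel_left _ hM]
    have shi : ∀ t < e, supportMap (oddD n) (a + e)
        (sol2 (2 ^ a - i) (2 ^ e) (i * 2 ^ e - 1) 1) (a + t) = i * 2 ^ t := by
      intro t ht
      unfold supportMap
      rw [hhi t ht, Nat.mul_div_cancel_left _ hM]
    have hcross : ∀ k t, 2 ^ k ≠ i * 2 ^ t := by
      intro k t hkt
      have hdv : i ∣ 2 ^ k := ⟨_, hkt⟩
      obtain ⟨j, _, hj⟩ := (Nat.dvd_prime_pow Nat.prime_two).mp hdv
      rcases Nat.eq_zero_or_pos j with rfl | hj0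
      · simp at hj; omega
      · obtain ⟨j', rfl⟩ : ∃ j', j = j' + 1 := ⟨j - 1, by omega⟩
        rw [pow_succ] at hj; omega
    intro k hk l hl hkl
    simp only [Finset.coe_range, Set.mem_Iio] at hk hl
    rcases Nat.lt_or_ge k a with ka | ka <;> rcases Nat.lt_or_ge l a with la | la
    · rw [slo k ka, slo l la] at hkl
      exact Nat.pow_right_injective le_rfl hkl
    · obtain ⟨t, rfl⟩ := Nat.exists_eq_add_of_le la
      rw [slo k ka, shi t (by omega)] at hkl
      exact absurd hkl (hcross _ _)
    · obtain ⟨t, rfl⟩ := Nat.exists_eq_add_of_le ka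
      rw [slo l la, shi t (by omega)] at hkl
      exact absurd hkl.symm (hcross _ _)
    · obtain ⟨t, rfl⟩ := Nat.exists_eq_add_of_le ka
      obtain ⟨s, rfl⟩ := Nat.exists_eq_add_of_le la
      rw [shi t (by omega), shi s (by omega)] at hkl
      have := Nat.pow_right_injective le_rfl (Nat.eq_of_mul_eq_mul_left (by omega) hkl)
      omega
  · unfold weight
    rw [sum_sol2 h1 h2 hne (fun _ u => s2 u) (fun _ => by simp [s2]), s2_two_pow]
    have hs1 : s2 1 = 1 := s2_two_pow 0
    rw [hs1]

lemma sol2_of_topSet {D : Finset ℕ} {ℓ e d1 d2 : ℕ} {V : ℕ → ℕ} (hV : IsSolution D ℓ V)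
    (he1 : 1 ≤ e) (heℓ : e < ℓ) (hne : d1 ≠ d2)
    (h1 : topSet D ℓ V (ℓ - e - 1) = {d1}) (h2 : topSet D ℓ V (ℓ - 1) = {d2})
    (h3 : ∀ j < ℓ, j ≠ ℓ - e - 1 → j ≠ ℓ - 1 → topSet D ℓ V j = ∅) :
    V = sol2 d1 (2 ^ e) d2 1 := by
  have hpos : 0 < 2 ^ ℓ := by positivity
  have hmem : ∀ d j, j < ℓ → ((V d).testBit j = true ↔ d ∈ topSet D ℓ V (ℓ - 1 - j)) := by
    intro d j hj
    unfold topSet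
    rw [Finset.mem_filter, top_iff (hV.bounded d) (by omega), show ℓ - 1 - (ℓ - 1 - j) = j by omega]
    constructor
    · intro h
      refine ⟨?_, h⟩
      by_contra hd
      rw [hV.supp_sub d hd] at h
      simp at h
    · exact fun h => h.2
  have hs : ∀ d j, (sol2 d1 (2 ^ e) d2 1 d).testBit j = true ↔ (d = d1 ∧ j = e) ∨ (d = d2 ∧ j = 0) := by
    intro d j
    unfold sol2
    split_ifs with c1 c2
    · subst c1
      simp only [Nat.testBit_two_pow, decide_eq_true_iff]
      constructor
      · intro h; exact Or.inl ⟨trivial, h.symm⟩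
      · rintro (h | h)
        · exact h.2.symm
        · exact absurd h.1 hne
    · subst c2
      rw [show (1 : ℕ) = 2 ^ 0 by rfl]
      simp only [Nat.testBit_two_pow, decide_eq_true_iff]
      constructor
      · intro h; exact Or.inr ⟨trivial, h.symm⟩
      · rintro (h | h)
        · exact absurd h.1 c1
        · exact h.2.symm
    · simp [c1, c2]
  funext d
  apply Nat.eq_of_testBit_eq
  intro j
  rw [Bool.eq_iff_iff, hs]
  rcases Nat.lt_or_ge j ℓ with hj | hj
  · rw [hmem d j hj]
    by_cases c0 : j = 0
    · subst c0
      rw [Nat.sub_zero, h2, Finset.mem_singleton]; omega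
    · by_cases ce : j = e
      · subst ce
        rw [show ℓ - 1 - j = ℓ - j - 1 by omega, h1, Finset.mem_singleton]; omega
      · rw [h3 _ (by omega) (by omega) (by omega)]
        simp [c0, ce]
  · have : V d < 2 ^ j := lt_of_le_of_lt (hV.bounded d)
      (lt_of_lt_of_le (by omega) (Nat.pow_le_pow_right (by norm_num) hj))
    rw [Nat.testBit_lt_two_pow this]
    constructor
    · intro h; simp at h
    · intro h; omega

lemma main_class {n ℓ : ℕ} {U : ℕ → ℕ} (hn : 10 ≤ n) (hU : IsSolution (oddD n) ℓ U)
    (hI : IrreducibleSol (oddD n) ℓ U) (h1 : (2 * n - 1) * weight (oddD n) U ≤ 2 * ℓ)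
    (h2 : ℓ < n * weight (oddD n) U) :
    ℓ = 2 * n - 1 ∧ weight (oddD n) U = 2 ∧
          (IsShiftOf ℓ U (sol2 (2 ^ n - 3) (2 ^ (n - 1)) (3 * 2 ^ (n - 1) - 1) 1) ∨
            ∃ i ∈ ({3, 5, 7} : Finset ℕ),
              IsShiftOf ℓ U (sol2 (2 ^ (n + 1) - i) (2 ^ (n - 2)) (i * 2 ^ (n - 2) - 1) 1)) := by
  have hsub : ∀ V k, topSet (oddD n) ℓ V k ⊆ oddD n := fun V k => Finset.filter_subset _ _
  have h1z : (2 * (n : ℤ) - 1) * (weight (oddD n) U : ℕ) ≤ 2 * ℓ := by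
    have : ((2 * n - 1 : ℕ) : ℤ) = 2 * n - 1 := by omega
    rw [← this]; exact_mod_cast h1
  have hw0 : 0 < weight (oddD n) U := by
    rcases Nat.eq_zero_or_pos (weight (oddD n) U) with h | h
    · rw [h] at h2; omega
    · exact h
  obtain ⟨hc, hb, k0, hk0, hxk0⟩ := cycle_core hn (hsub U) (support_pos hU) (support_step hU)
    (support_period hU) hI _ (weight_eq hU.bounded) hw0 h1z
  have hV := shiftSol_sol hU k0
  have hVI := shiftSol_irred hU hI k0
  have hVw := shiftSol_weight hU k0
  have hshift : ∀ W, shiftSol ℓ U k0 = W → IsShiftOf ℓ U W := by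
    rintro W rfl
    refine ⟨ℓ - k0, fun d => ?_⟩
    unfold shiftSol
    rw [← Function.iterate_add_apply, Nat.sub_add_cancel hk0.le, iter_full (hU.bounded d)]
  have hV0 : supportMap (oddD n) ℓ (shiftSol ℓ U k0) 0 = 1 := by
    rw [shiftSol_support, zero_add, hxk0]
  generalize shiftSol ℓ U k0 = V at *
  rw [← hVw] at hw0 h1z h2 ⊢
  obtain ⟨hc, hb, -⟩ := cycle_core hn (hsub V) (support_pos hV) (support_step hV)
    (support_period hV) hVI _ (weight_eq hV.bounded) hw0 h1z
  obtain ⟨hℓ, hw2, e, i, he1, heℓ, hcase, hA1, hA2, hA3⟩ := cycle_class hn (hsub V)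
    (support_step hV) (support_period hV) hVI _ (weight_eq hV.bounded) h1z h2 hc hb hV0
  refine ⟨hℓ, hw2, ?_⟩
  have key := fun hne => hshift _ (sol2_of_topSet hV he1 heℓ hne hA1 hA2 hA3)
  obtain ⟨m, rfl⟩ : ∃ m, n = m + 2 := ⟨n - 2, by omega⟩
  have p1 : 2 ^ (m + 2 + 1) = 8 * 2 ^ m := by ring
  have p2 : 2 ^ (m + 2) = 4 * 2 ^ m := by ring
  have p3 : 2 ^ (m + 1) = 2 * 2 ^ m := by ring
  have hm : 2 ^ 8 ≤ 2 ^ m := Nat.pow_le_pow_right (by norm_num) (by omega)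
  rcases hcase with ⟨he, rfl⟩ | ⟨he, hi⟩
  · left
    rw [he, show ℓ - (m + 2 - 1) = m + 2 by omega, mul_comm (2 ^ (m + 2 - 1)) 3] at key
    apply key
    rw [show m + 2 - 1 = m + 1 by omega]
    omega
  · right
    refine ⟨i, by simpa using hi, ?_⟩
    rw [he, show ℓ - (m + 2 - 2) = m + 2 + 1 by omega, mul_comm (2 ^ (m + 2 - 2)) i] at key
    apply key
    rw [show m + 2 - 2 = m by omega]
    rcases hi with rfl | rfl | rfl <;> omega

/-- For `n` large enough and `D = {i : 1 ≤ i ≤ 2^{n+1} − 3, i odd}`: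
(a) no irreducible solution has density strictly between `1/n` and `2/(2n−1)`;
(b) the irreducible solutions of density exactly `2/(2n−1)` (necessarily of weight 2
and length `2n−1`) are exactly, up to shift, `2^{n−1}·(2^n − 3) + 1·(3·2^{n−1} − 1)`
and, for `i ∈ {3,5,7}`, `2^{n−2}·(2^{n+1} − i) + 1·(i·2^{n−2} − 1)`. -/
theorem density_two_over_2n_sub_one_solutions :
    ∃ N : ℕ, ∀ n : ℕ, N ≤ n →
      (∀ ℓ U, IsSolution (oddD n) ℓ U → IrreducibleSol (oddD n) ℓ U →
        ¬(ℓ < n * weight (oddD n) U ∧ (2 * n - 1) * weight (oddD n) U < 2 * ℓ)) ∧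
      (IsSolution (oddD n) (2 * n - 1) (sol2 (2 ^ n - 3) (2 ^ (n - 1)) (3 * 2 ^ (n - 1) - 1) 1) ∧
        IrreducibleSol (oddD n) (2 * n - 1) (sol2 (2 ^ n - 3) (2 ^ (n - 1)) (3 * 2 ^ (n - 1) - 1) 1) ∧
        weight (oddD n) (sol2 (2 ^ n - 3) (2 ^ (n - 1)) (3 * 2 ^ (n - 1) - 1) 1) = 2) ∧
      (∀ i ∈ ({3, 5, 7} : Finset ℕ),
        IsSolution (oddD n) (2 * n - 1) (sol2 (2 ^ (n + 1) - i) (2 ^ (n - 2)) (i * 2 ^ (n - 2) - 1) 1) ∧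
        IrreducibleSol (oddD n) (2 * n - 1) (sol2 (2 ^ (n + 1) - i) (2 ^ (n - 2)) (i * 2 ^ (n - 2) - 1) 1) ∧
        weight (oddD n) (sol2 (2 ^ (n + 1) - i) (2 ^ (n - 2)) (i * 2 ^ (n - 2) - 1) 1) = 2) ∧
      (∀ ℓ U, IsSolution (oddD n) ℓ U → IrreducibleSol (oddD n) ℓ U →
        (2 * n - 1) * weight (oddD n) U = 2 * ℓ →
        ℓ = 2 * n - 1 ∧ weight (oddD n) U = 2 ∧
          (IsShiftOf ℓ U (sol2 (2 ^ n - 3) (2 ^ (n - 1)) (3 * 2 ^ (n - 1) - 1) 1) ∨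
            ∃ i ∈ ({3, 5, 7} : Finset ℕ),
              IsShiftOf ℓ U (sol2 (2 ^ (n + 1) - i) (2 ^ (n - 2)) (i * 2 ^ (n - 2) - 1) 1))) := by
  refine ⟨10, fun n hn => ⟨?_, ?_, ?_, ?_⟩⟩
  · rintro ℓ U hU hI ⟨h1, h2⟩
    obtain ⟨h3, h4, -⟩ := main_class hn hU hI h2.le h1
    rw [h4] at h1 h2
    omega
  · obtain ⟨m, rfl⟩ : ∃ m, n = m + 2 := ⟨n - 2, by omega⟩
    have p1 : 2 ^ (m + 2 + 1) = 8 * 2 ^ m := by ring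
    have p2 : 2 ^ (m + 2) = 4 * 2 ^ m := by ring
    have p3 : 2 ^ (m + 1) = 2 * 2 ^ m := by ring
    have hm : 2 ^ 8 ≤ 2 ^ m := Nat.pow_le_pow_right (by norm_num) (by omega)
    rw [show 2 * (m + 2) - 1 = (m + 2) + (m + 1) by omega, show m + 2 - 1 = m + 1 by omega]
    apply good_sol (by omega) (by omega) (by norm_num) le_rfl (by omega)
    · rw [oddD_mem hn]; omega
    · rw [oddD_mem hn]; omega
    · omega
  · intro i hi
    obtain ⟨m, rfl⟩ : ∃ m, n = m + 2 := ⟨n - 2, by omega⟩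
    have p1 : 2 ^ (m + 2 + 1) = 8 * 2 ^ m := by ring
    have hm : 2 ^ 8 ≤ 2 ^ m := Nat.pow_le_pow_right (by norm_num) (by omega)
    have hev : 2 ^ m % 2 = 0 := by
      rw [show m = (m - 1) + 1 by omega, pow_succ]; omega
    have hi' : i = 3 ∨ i = 5 ∨ i = 7 := by simpa using hi
    rw [show 2 * (m + 2) - 1 = (m + 2 + 1) + m by omega, show m + 2 - 2 = m by omega]
    apply good_sol (by omega) (by omega) (by omega) (by omega) (by omega)
    · rw [oddD_mem hn]; omega
    · rw [oddD_mem hn]; rcases hi' with rfl | rfl | rfl <;> omega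
    · rcases hi' with rfl | rfl | rfl <;> omega
  · intro ℓ U hU hI h
    apply main_class hn hU hI h.le
    have hw0 : 0 < weight (oddD n) U := by
      rcases Nat.eq_zero_or_pos (weight (oddD n) U) with h0 | h0
      · rw [h0] at h; have := hU.len_pos; omega
      · exact h0
    have : (2 * n - 1) * weight (oddD n) U + weight (oddD n) U = 2 * (n * weight (oddD n) U) := by
      obtain ⟨m, rfl⟩ : ∃ m, n = m + 1 := ⟨n - 1, by omega⟩
      rw [show 2 * (m + 1) - 1 = 2 * m + 1 by omega]; ring
    omega
end
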